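/- arXiv:1506.08980 — 10 statements merged into one kernel-verified Lean document; each statement's English description precedes it below -/
import Mathlib

section
/- Let X be a zero-dimensional space. A subset Z ⊆ X is the zero-set Z(f) of some function f ∈ C_c(X) if and only if there is a sequence (U_n)_{n∈ℕ} of clopen subsets of X with Z = ⋂_{n∈ℕ} U_n. -/
open Set TopologicalSpace

/-!
If `f` has countable image, all but countably many spheres around a point miss the image of `f`;
the preimage of a ball bounded by such a sphere is clopen, and a sequence of these balls shrinking
to `0` exhibits `f ⁻¹' {0}` as an intersection of clopen sets. Conversely, a sequence `U` of clopen
sets is the same as a continuous map to the Cantor space `ℕ → Bool`, under which `⋂ n, U n` is the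
preimage of the constant sequence `true`. The distance to that sequence takes only the values `0`
and `(1 / 2) ^ n`, so its composition with the map is the required function.
-/

open Metric
open scoped Topology

section CountableRange

variable {X Y : Type*} [TopologicalSpace X] {f : X → Y}

lemma isClopen_preimage_ball [PseudoMetricSpace Y] (hf : Continuous f) {y : Y} {r : ℝ}
    (hr : ∀ x, dist (f x) y ≠ r) : IsClopen (f ⁻¹' ball y r) := by
  have ball_eq_closedBall : f ⁻¹' ball y r = f ⁻¹' closedBall y r :=
    Set.ext fun x => (hr x).le_iff_lt.symm
  exact ⟨ball_eq_closedBall ▸ isClosed_closedBall.preimage hf, isOpen_ball.preimage hf⟩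

lemma hasBasis_nhds_isClopen_preimage_ball [PseudoMetricSpace Y] (hf : Continuous f)
    (hrange : (range f).Countable) (y : Y) :
    (𝓝 y).HasBasis (fun r => 0 < r ∧ IsClopen (f ⁻¹' ball y r)) (ball y) := by
  refine nhds_basis_ball.restrict fun ε hε => ?_
  have radii_dense : Dense ((fun z => dist z y) '' range f)ᶜ :=
    (hrange.image fun z => dist z y).dense_compl ℝ
  obtain ⟨r, hr, hr_pos, hr_lt⟩ := radii_dense.exists_between hε
  exact ⟨r, hr_pos, isClopen_preimage_ball hf fun x hx => hr ⟨f x, mem_range_self x, hx⟩,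
    ball_subset_ball hr_lt.le⟩

lemma exists_isClopen_preimage_singleton_eq_iInter [MetricSpace Y] (hf : Continuous f)
    (hrange : (range f).Countable) (y : Y) :
    ∃ U : ℕ → Set X, (∀ n, IsClopen (U n)) ∧ f ⁻¹' {y} = ⋂ n, U n := by
  obtain ⟨r, hr, hbasis⟩ :=
    (hasBasis_nhds_isClopen_preimage_ball hf hrange y).exists_antitone_subbasis
  refine ⟨fun n => f ⁻¹' ball y (r n), fun n => (hr n).2, ?_⟩
  have iInter_ball : ⋂ n, ball y (r n) = {y} := by
    simpa only [iInter_true] using biInter_basis_nhds hbasis.toHasBasis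
  rw [← iInter_ball, preimage_iInter]

end CountableRange

attribute [local instance] PiNat.dist in
lemma countable_range_piNat_dist {E : ℕ → Type*} (y : ∀ n, E n) :
    (range fun x => dist x y).Countable := by
  refine ((countable_range fun n : ℕ => (1 / 2 : ℝ) ^ n).insert 0).mono ?_
  rintro _ ⟨x, rfl⟩
  obtain rfl | hne := eq_or_ne x y
  · exact Or.inl (PiNat.dist_self x)
  · exact Or.inr ⟨PiNat.firstDiff x y, (PiNat.dist_eq_of_ne hne).symm⟩

lemma continuous_boolIndicator_pi {X ι : Type*} [TopologicalSpace X] {U : ι → Set X}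
    (hU : ∀ i, IsClopen (U i)) : Continuous fun x i => (U i).boolIndicator x :=
  continuous_pi fun i => (continuous_boolIndicator_iff_isClopen (U i)).2 (hU i)

lemma boolIndicator_pi_eq_true_iff {X ι : Type*} {U : ι → Set X} {x : X} :
    (fun i => (U i).boolIndicator x) = (fun _ => true) ↔ x ∈ ⋂ i, U i := by
  rw [mem_iInter, funext_iff]
  exact forall_congr' fun i => ((U i).mem_iff_boolIndicator x).symm

attribute [local instance] PiNat.metricSpace in
lemma exists_continuous_countable_range_iInter_eq {X : Type*} [TopologicalSpace X]
    {U : ℕ → Set X} (hU : ∀ n, IsClopen (U n)) :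
    ∃ f : X → ℝ, Continuous f ∧ (range f).Countable ∧ ⋂ n, U n = f ⁻¹' {0} := by
  refine ⟨fun x => dist (fun n => (U n).boolIndicator x) (fun _ => true),
    (continuous_boolIndicator_pi hU).dist continuous_const, ?_, ?_⟩
  · exact (countable_range_piNat_dist fun _ => true).mono
      (range_subset_iff.2 fun x => mem_range_self fun n => (U n).boolIndicator x)
  · ext x
    rw [mem_preimage, mem_singleton_iff, dist_eq_zero, boolIndicator_pi_eq_true_iff]

theorem stmt_0_general {X : Type*} [TopologicalSpace X] (Z : Set X) :
    (∃ f : X → ℝ, Continuous f ∧ (range f).Countable ∧ Z = f ⁻¹' {0}) ↔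
      (∃ U : ℕ → Set X, (∀ n, IsClopen (U n)) ∧ Z = ⋂ n, U n) := by
  constructor
  · rintro ⟨f, hf, hrange, rfl⟩
    exact exists_isClopen_preimage_singleton_eq_iInter hf hrange 0
  · rintro ⟨U, hU, rfl⟩
    exact exists_continuous_countable_range_iInter_eq hU

/-- In a zero-dimensional (Hausdorff, clopen-basis) space `X`, a set `Z ⊆ X`
is the zero-set of some continuous real-valued function with countable image
iff it is a countable intersection of clopen sets. -/
theorem stmt_0 {X : Type*} [TopologicalSpace X] [T2Space X]
    (hX : IsTopologicalBasis {s : Set X | IsClopen s}) (Z : Set X) :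
    (∃ f : X → ℝ, Continuous f ∧ (Set.range f).Countable ∧ Z = f ⁻¹' {0}) ↔
      (∃ U : ℕ → Set X, (∀ n, IsClopen (U n)) ∧ Z = ⋂ n, U n) :=
  stmt_0_general Z
end

section
/- Let X be a zero-dimensional space with Banaschewski compactification bX. For all f, g ∈ C_c(X), the closure in bX of Z(f) ∩ Z(g) equals the intersection of the closure in bX of Z(f) with the closure in bX of Z(g). -/
open Set TopologicalSpace

/-!
The zero-set of a continuous function with countable image is a countable intersection of clopen
sets: cut the function off at levels tending to `0` that avoid its image. Two disjoint countable
intersections of clopen sets are separated by a clopen set `C`, and since the indicator of `C`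
extends to the compactification, they have disjoint closures there. A point whose clopen
neighbourhood `V` misses `Z(f) ∩ Z(g)` therefore cannot lie in both closures: apply this to
`Z(f) ∩ V` and `Z(g) ∩ V`.
-/

/-- Countable intersections of clopen sets: the property of the zero-sets of `C_c(X)` on which the
closure formula rests. The family is indexed by `ℕ`, which loses no generality because repetitions
and the whole space are allowed. -/
def IsClopenGδ {X : Type*} [TopologicalSpace X] (S : Set X) : Prop :=
  ∃ A : ℕ → Set X, (∀ n, IsClopen (A n)) ∧ S = ⋂ n, A n

section ClopenGδ

variable {X : Type*} [TopologicalSpace X] {S T : Set X}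

theorem IsClopenGδ.inter_isClopen {W : Set X} (hS : IsClopenGδ S) (hW : IsClopen W) :
    IsClopenGδ (S ∩ W) := by
  obtain ⟨A, hA, rfl⟩ := hS
  exact ⟨fun n => A n ∩ W, fun n => (hA n).inter hW, iInter_inter W A⟩

theorem isClopen_preimage_Iio_of_notMem_range {α : Type*} [LinearOrder α] [TopologicalSpace α]
    [OrderClosedTopology α] {f : X → α} (hf : Continuous f) {a : α} (ha : a ∉ range f) :
    IsClopen (f ⁻¹' Iio a) := by
  have preimage_Iio_eq : f ⁻¹' Iio a = f ⁻¹' Iic a :=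
    ext fun x => ⟨le_of_lt, fun hx => lt_of_le_of_ne hx fun h => ha ⟨x, h⟩⟩
  exact ⟨preimage_Iio_eq ▸ isClosed_Iic.preimage hf, isOpen_Iio.preimage hf⟩

theorem isClopenGδ_preimage_singleton {Y : Type*} [MetricSpace Y] {f : X → Y}
    (hf : Continuous f) (hfc : (range f).Countable) (y : Y) : IsClopenGδ (f ⁻¹' {y}) := by
  let d : X → ℝ := fun x => dist (f x) y
  have hd : Continuous d := hf.dist continuous_const
  have range_countable : (range d).Countable :=
    range_comp (dist · y) f ▸ hfc.image (dist · y)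
  obtain ⟨r, -, hr, r_tendsto⟩ :=
    (range_countable.dense_compl ℝ).exists_seq_strictAnti_tendsto 0
  refine ⟨fun n => d ⁻¹' Iio (r n),
    fun n => isClopen_preimage_Iio_of_notMem_range hd (hr n).2, Subset.antisymm ?_ ?_⟩
  · rintro x rfl
    exact mem_iInter.mpr fun n => (dist_self (f x)).trans_lt (hr n).1
  · intro x hx
    exact dist_le_zero.mp (ge_of_tendsto' r_tendsto fun n => (mem_iInter.mp hx n).le)

theorem IsClopenGδ.exists_isClopen_subset_disjoint (hS : IsClopenGδ S) (hT : IsClopenGδ T)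
    (hST : Disjoint S T) : ∃ C, IsClopen C ∧ S ⊆ C ∧ Disjoint C T := by
  obtain ⟨A, hA, rfl⟩ := hS
  obtain ⟨B, hB, rfl⟩ := hT
  -- The clopen sets `(A n ∩ B n)ᶜ` cover `X`; on each piece `P n` of the partition they induce,
  -- the complement of `B n` contains `⋂ n, A n` and misses `⋂ n, B n`.
  let P : ℕ → Set X := disjointed fun n => (A n ∩ B n)ᶜ
  have P_isClopen (n : ℕ) : IsClopen (P n) :=
    disjointedRec (fun _ i hU => hU.diff ((hA i).inter (hB i)).compl)
      ((hA n).inter (hB n)).compl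
  have exists_mem_P (x : X) : ∃ n, x ∈ P n := by
    rw [← mem_iUnion, iUnion_disjointed, ← compl_iInter, iInter_inter_distrib, hST.inter_eq,
      compl_empty]
    exact mem_univ x
  have compl_eq : (⋃ n, P n \ B n)ᶜ = ⋃ n, P n ∩ B n := by
    ext x
    obtain ⟨n, hn⟩ := exists_mem_P x
    have mem_P_iff (m : ℕ) : x ∈ P m ↔ m = n :=
      ⟨fun hm => (disjoint_disjointed _).eq (not_disjoint_iff.mpr ⟨x, hm, hn⟩), fun h => h ▸ hn⟩
    simp [mem_P_iff]
  refine ⟨⋃ n, P n \ B n, ⟨?_, ?_⟩, fun x hx => ?_, ?_⟩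
  · rw [← isOpen_compl_iff, compl_eq]
    exact isOpen_iUnion fun n => ((P_isClopen n).inter (hB n)).isOpen
  · exact isOpen_iUnion fun n => ((P_isClopen n).diff (hB n)).isOpen
  · obtain ⟨n, hn⟩ := exists_mem_P x
    have x_notMem : x ∉ A n ∩ B n := disjointed_subset _ n hn
    exact mem_iUnion.mpr ⟨n, hn, fun hxB => x_notMem ⟨mem_iInter.mp hx n, hxB⟩⟩
  · exact disjoint_iUnion_left.mpr fun n => disjoint_sdiff_left.mono_right (iInter_subset B n)

end ClopenGδ

section Extension

variable {X B : Type*} [TopologicalSpace X] [TopologicalSpace B] {e : X → B} {S T : Set X}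

theorem disjoint_closure_image_compl_of_isClopen
    (hext : ∀ g : X → Bool, Continuous g → ∃ G : B → Bool, Continuous G ∧ ∀ x, G (e x) = g x)
    {C : Set X} (hC : IsClopen C) : Disjoint (closure (e '' C)) (closure (e '' Cᶜ)) := by
  obtain ⟨G, hG, hGC⟩ := hext C.boolIndicator ((continuous_boolIndicator_iff_isClopen C).mpr hC)
  have closure_subset {D : Set X} {b : Bool} (hD : ∀ x ∈ D, C.boolIndicator x = b) :
      closure (e '' D) ⊆ G ⁻¹' {b} :=
    closure_minimal (image_subset_iff.mpr fun x hx => (hGC x).trans (hD x hx))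
      ((isClosed_discrete {b}).preimage hG)
  have disjoint_fibers : Disjoint (G ⁻¹' {true}) (G ⁻¹' {false}) :=
    (disjoint_singleton.mpr (by decide)).preimage G
  exact disjoint_fibers.mono
    (closure_subset fun x => (mem_iff_boolIndicator C x).mp)
    (closure_subset fun x => (notMem_iff_boolIndicator C x).mp)

theorem IsClopenGδ.disjoint_closure_image
    (hext : ∀ g : X → Bool, Continuous g → ∃ G : B → Bool, Continuous G ∧ ∀ x, G (e x) = g x)
    (hS : IsClopenGδ S) (hT : IsClopenGδ T) (hST : Disjoint S T) :
    Disjoint (closure (e '' S)) (closure (e '' T)) := by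
  obtain ⟨C, hC, hSC, hCT⟩ := hS.exists_isClopen_subset_disjoint hT hST
  exact (disjoint_closure_image_compl_of_isClopen hext hC).mono
    (closure_mono (image_mono hSC)) (closure_mono (image_mono hCT.subset_compl_left))

theorem stmt_1_general (hB : IsTopologicalBasis {s : Set B | IsClopen s}) (he : Continuous e)
    (hext : ∀ g : X → Bool, Continuous g → ∃ G : B → Bool, Continuous G ∧ ∀ x, G (e x) = g x)
    (hS : IsClopenGδ S) (hT : IsClopenGδ T) :
    closure (e '' (S ∩ T)) = closure (e '' S) ∩ closure (e '' T) := by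
  refine Subset.antisymm
    ((closure_mono (image_inter_subset e S T)).trans closure_inter_subset) ?_
  rintro p ⟨hpS, hpT⟩
  refine hB.mem_closure_iff.mpr fun V (hV : IsClopen V) hpV => ?_
  have mem_closure_inter {D : Set X} (hp : p ∈ closure (e '' D)) :
      p ∈ closure (e '' (D ∩ e ⁻¹' V)) := by
    rw [image_inter_preimage]
    exact hV.isOpen.closure_inter ⟨hp, hpV⟩
  have hW : IsClopen (e ⁻¹' V) := hV.preimage he
  have not_disjoint : ¬Disjoint (S ∩ e ⁻¹' V) (T ∩ e ⁻¹' V) := fun h =>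
    ((hS.inter_isClopen hW).disjoint_closure_image hext (hT.inter_isClopen hW) h).notMem_of_mem_left
      (mem_closure_inter hpS) (mem_closure_inter hpT)
  obtain ⟨x, ⟨hxS, hxV⟩, hxT, -⟩ := not_disjoint_iff.mp not_disjoint
  exact ⟨e x, hxV, mem_image_of_mem e ⟨hxS, hxT⟩⟩

end Extension

/-- In the Banaschewski compactification `B` of a zero-dimensional space `X`,
for `f, g ∈ C_c(X)` one has `cl_B (Z(f) ∩ Z(g)) = cl_B Z(f) ∩ cl_B Z(g)`. -/
theorem stmt_1 {B : Type*} [TopologicalSpace B] [CompactSpace B] [T2Space B]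
    (hB : IsTopologicalBasis {s : Set B | IsClopen s})
    (X : Set B) (hd : Dense X)
    (hext : ∀ g : X → Bool, Continuous g → ∃ G : B → Bool, Continuous G ∧ ∀ x : X, G x = g x)
    (f g : X → ℝ) (hf : Continuous f) (hfc : (Set.range f).Countable)
    (hg : Continuous g) (hgc : (Set.range g).Countable) :
    closure (Subtype.val '' (f ⁻¹' {0} ∩ g ⁻¹' {0})) =
      closure (Subtype.val '' (f ⁻¹' {0})) ∩ closure (Subtype.val '' (g ⁻¹' {0})) :=
  stmt_1_general hB continuous_subtype_val hext
    (isClopenGδ_preimage_singleton hf hfc 0) (isClopenGδ_preimage_singleton hg hgc 0)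
end

section
/- (Gelfand–Kolmogoroff for C_c) Let X be a zero-dimensional space with Banaschewski compactification bX. For each point p ∈ bX, the set M^p_c = {f ∈ C_c(X) : p ∈ cl_{bX} Z(f)} is a maximal ideal of the ring C_c(X); moreover, every maximal ideal of C_c(X) is equal to M^p_c for exactly one point p ∈ bX. -/
/-!
Disjoint zero-sets of functions in `C_c(X)` have disjoint closures in `B`. If `f` and `g` have no
common zero, then, the ranges being countable, some `s > 0` differs from every quotient
`|f y| / |g y|`; the set `{|f| < s |g|}` is therefore clopen, it separates `Z(f)` from `Z(g)`, and
its indicator extends to `B`. Clopen sets are zero-sets, so this can be localized at a clopen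
neighbourhood of a point, and `cl (Z(f) ∩ Z(g)) = cl Z(f) ∩ cl Z(g)` follows. Hence `M^p_c` is
closed under addition.

Since `f² + g²` vanishes exactly on `Z(f) ∩ Z(g)` and functions without zeros are units, the
zero-sets of a proper ideal have the finite intersection property. If `f ∉ M^p_c`, then `Z(f)`
misses a clopen neighbourhood of `p`, whose trace on `X` is the zero-set of a member of `M^p_c`;
so `M^p_c` is maximal. For an arbitrary proper ideal, compactness of `B` gives a point in the
closures of all its zero-sets.
-/

open Set TopologicalSpace

/-- The subring `C_c(Y)` of `C(Y, ℝ)` consisting of continuous real-valued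
functions with countable image. -/
def Cc (Y : Type*) [TopologicalSpace Y] : Subring C(Y, ℝ) where
  carrier := {f | (Set.range (f : Y → ℝ)).Countable}
  mul_mem' {a b} ha hb := Set.Countable.mono
    (by rintro x ⟨y, rfl⟩; exact Set.mem_image2_of_mem ⟨y, rfl⟩ ⟨y, rfl⟩)
    (ha.image2 hb (· * ·))
  one_mem' := Set.Countable.mono (by rintro x ⟨y, rfl⟩; rfl) (Set.countable_singleton 1)
  add_mem' {a b} ha hb := Set.Countable.mono
    (by rintro x ⟨y, rfl⟩; exact Set.mem_image2_of_mem ⟨y, rfl⟩ ⟨y, rfl⟩)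
    (ha.image2 hb (· + ·))
  zero_mem' := Set.Countable.mono (by rintro x ⟨y, rfl⟩; rfl) (Set.countable_singleton 0)
  neg_mem' {a} ha := Set.Countable.mono
    (by rintro x ⟨y, rfl⟩; exact ⟨a y, ⟨y, rfl⟩, rfl⟩) (ha.image (-·))

namespace Cc

section ZeroSet

variable {Y : Type*} [TopologicalSpace Y]

/-- The zero-set `Z(f)` of `f ∈ C_c(Y)`. -/
def zeroSet (f : Cc Y) : Set Y := (f : C(Y, ℝ)) ⁻¹' {0}

theorem mem_zeroSet {f : Cc Y} {y : Y} : y ∈ zeroSet f ↔ (f : C(Y, ℝ)) y = 0 := Iff.rfl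

theorem zeroSet_zero : zeroSet (0 : Cc Y) = univ :=
  eq_univ_of_forall fun _ => rfl

theorem zeroSet_inter_subset_zeroSet_add (f g : Cc Y) :
    zeroSet f ∩ zeroSet g ⊆ zeroSet (f + g) := fun y hy =>
  show (f : C(Y, ℝ)) y + (g : C(Y, ℝ)) y = 0 by
    rw [mem_zeroSet.1 hy.1, mem_zeroSet.1 hy.2, add_zero]

theorem zeroSet_subset_zeroSet_mul_left (f g : Cc Y) : zeroSet g ⊆ zeroSet (f * g) := fun y hy =>
  mul_eq_zero_of_right ((f : C(Y, ℝ)) y) (mem_zeroSet.1 hy)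

theorem zeroSet_mul_self_add_mul_self (f g : Cc Y) :
    zeroSet (f * f + g * g) = zeroSet f ∩ zeroSet g :=
  Set.ext fun _ => mul_self_add_mul_self_eq_zero

theorem isUnit_iff_zeroSet_eq_empty {f : Cc Y} : IsUnit f ↔ zeroSet f = ∅ := by
  constructor
  · intro hf
    obtain ⟨g, hfg⟩ := hf.exists_left_inv
    refine eq_empty_of_forall_notMem fun y hy => one_ne_zero (α := ℝ) ?_
    have hy' : y ∈ zeroSet (g * f) := zeroSet_subset_zeroSet_mul_left g f hy
    rwa [hfg] at hy'
  · intro hf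
    have hne (y : Y) : (f : C(Y, ℝ)) y ≠ 0 := fun hy => notMem_empty y (hf ▸ mem_zeroSet.2 hy)
    let g : C(Y, ℝ) := ⟨fun y => ((f : C(Y, ℝ)) y)⁻¹, (f : C(Y, ℝ)).continuous.inv₀ hne⟩
    have hg : (range g).Countable :=
      (f.2.image (·⁻¹)).mono (range_comp (·⁻¹) (f : C(Y, ℝ))).subset
    refine IsUnit.of_mul_eq_one ⟨g, hg⟩ ?_
    ext y
    exact mul_inv_cancel₀ (hne y)

theorem exists_zeroSet_eq_of_isClopen {U : Set Y} (hU : IsClopen U) :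
    ∃ e : Cc Y, zeroSet e = U := by
  have hcont : Continuous (Uᶜ.indicator (1 : Y → ℝ)) :=
    hU.compl.continuous_indicator continuous_one
  have hrange : (range (Uᶜ.indicator (1 : Y → ℝ))).Countable :=
    ((countable_singleton (1 : ℝ)).insert 0).mono <|
      range_subset_iff.2 fun y => indicator_eq_zero_or_self Uᶜ 1 y
  refine ⟨⟨⟨_, hcont⟩, hrange⟩, ?_⟩
  ext y
  simp [mem_zeroSet]

theorem exists_isClopen_zeroSet_subset_disjoint {f g : Cc Y}
    (hfg : Disjoint (zeroSet f) (zeroSet g)) :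
    ∃ U : Set Y, IsClopen U ∧ zeroSet f ⊆ U ∧ Disjoint (zeroSet g) U := by
  let F : Y → ℝ := fun y => |(f : C(Y, ℝ)) y|
  let G : Y → ℝ := fun y => |(g : C(Y, ℝ)) y|
  have hF : Continuous F := (f : C(Y, ℝ)).continuous.abs
  have hquot : (range fun y => F y / G y).Countable :=
    (f.2.image2 g.2 fun a b => |a| / |b|).mono <| by
      rintro _ ⟨y, rfl⟩
      exact ⟨_, mem_range_self y, _, mem_range_self y, rfl⟩
  obtain ⟨s, hs, hs0⟩ := (hquot.dense_compl ℝ).exists_mem_open isOpen_Ioi nonempty_Ioi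
  have hzero (y : Y) (hgy : G y = 0) : F y ≠ 0 := fun hfy =>
    disjoint_left.1 hfg (abs_eq_zero.1 hfy) (abs_eq_zero.1 hgy)
  have hne (y : Y) : F y ≠ s * G y := by
    intro hy
    by_cases hgy : G y = 0
    · exact hzero y hgy (by rw [hy, hgy, mul_zero])
    · exact hs ⟨y, (div_eq_iff hgy).2 hy⟩
  have hsG : Continuous fun y => s * G y := (g : C(Y, ℝ)).continuous.abs.const_mul s
  have hclosed : IsClosed {y | F y < s * G y} := by
    simpa only [fun y => (hne y).le_iff_lt] using isClosed_le hF hsG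
  refine ⟨{y | F y < s * G y}, ⟨hclosed, isOpen_lt hF hsG⟩, ?_, ?_⟩
  · intro y hy
    have hfy : F y = 0 := abs_eq_zero.2 hy
    have hgy : 0 < G y := (abs_nonneg _).lt_of_ne' fun hgy => hzero y hgy hfy
    exact hfy.trans_lt (mul_pos hs0 hgy)
  · refine disjoint_left.2 fun y hy (hlt : F y < s * G y) => ?_
    have hgy : G y = 0 := abs_eq_zero.2 hy
    rw [hgy, mul_zero] at hlt
    exact hlt.not_ge (abs_nonneg _)

theorem exists_mem_ideal_zeroSet_eq_inter {I : Ideal (Cc Y)} {f g : Cc Y} (hf : f ∈ I)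
    (hg : g ∈ I) : ∃ h ∈ I, zeroSet h = zeroSet f ∩ zeroSet g :=
  ⟨f * f + g * g, I.add_mem (I.mul_mem_left f hf) (I.mul_mem_left g hg),
    zeroSet_mul_self_add_mul_self f g⟩

theorem zeroSet_nonempty_of_mem_ideal {I : Ideal (Cc Y)} (hI : I ≠ ⊤) {f : Cc Y} (hf : f ∈ I) :
    (zeroSet f).Nonempty :=
  nonempty_iff_ne_empty.2 fun h =>
    hI (I.eq_top_of_isUnit_mem hf (isUnit_iff_zeroSet_eq_empty.2 h))

theorem ideal_eq_top_of_disjoint_zeroSet {I : Ideal (Cc Y)} {f g : Cc Y} (hf : f ∈ I)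
    (hg : g ∈ I) (hfg : Disjoint (zeroSet f) (zeroSet g)) : I = ⊤ := by
  obtain ⟨h, hh, hZ⟩ := exists_mem_ideal_zeroSet_eq_inter hf hg
  by_contra hI
  exact (zeroSet_nonempty_of_mem_ideal hI hh).ne_empty (hZ.trans hfg.inter_eq)

end ZeroSet

section Closure

variable {X B : Type*} [TopologicalSpace B] {i : X → B}

theorem closure_image_preimage_of_isClopen (hd : DenseRange i) {V : Set B} (hV : IsClopen V) :
    closure (i '' (i ⁻¹' V)) = V :=
  (closure_minimal (image_preimage_subset i V) hV.isClosed).antisymm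
    (hd.subset_closure_image_preimage_of_isOpen hV.isOpen)

variable [TopologicalSpace X]

theorem exists_isClopen_preimage_eq
    (hext : ∀ g : X → Bool, Continuous g → ∃ G : B → Bool, Continuous G ∧ ∀ x : X, G (i x) = g x)
    {U : Set X} (hU : IsClopen U) : ∃ V : Set B, IsClopen V ∧ i ⁻¹' V = U := by
  obtain ⟨G, hG, hGi⟩ := hext U.boolIndicator ((continuous_boolIndicator_iff_isClopen U).2 hU)
  refine ⟨G ⁻¹' {true}, (isClopen_discrete {true}).preimage hG, ?_⟩
  ext x
  rw [mem_iff_boolIndicator U x, ← hGi x]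
  rfl

theorem disjoint_closure_image_zeroSet
    (hext : ∀ g : X → Bool, Continuous g → ∃ G : B → Bool, Continuous G ∧ ∀ x : X, G (i x) = g x)
    {f g : Cc X} (hfg : Disjoint (zeroSet f) (zeroSet g)) :
    Disjoint (closure (i '' zeroSet f)) (closure (i '' zeroSet g)) := by
  obtain ⟨U, hU, hfU, hgU⟩ := exists_isClopen_zeroSet_subset_disjoint hfg
  obtain ⟨V, hV, rfl⟩ := exists_isClopen_preimage_eq hext hU
  have hf : closure (i '' zeroSet f) ⊆ V := closure_minimal (image_subset_iff.2 hfU) hV.isClosed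
  have hg : closure (i '' zeroSet g) ⊆ Vᶜ :=
    closure_minimal (image_subset_iff.2 hgU.subset_compl_right) hV.compl.isClosed
  exact disjoint_compl_right.mono hf hg

theorem closure_image_zeroSet_inter (hB : IsTopologicalBasis {s : Set B | IsClopen s})
    (hi : Continuous i)
    (hext : ∀ g : X → Bool, Continuous g → ∃ G : B → Bool, Continuous G ∧ ∀ x : X, G (i x) = g x)
    (f g : Cc X) :
    closure (i '' (zeroSet f ∩ zeroSet g)) =
      closure (i '' zeroSet f) ∩ closure (i '' zeroSet g) := by
  refine ((closure_mono (image_inter_subset i _ _)).trans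
    (closure_inter_subset_inter_closure _ _)).antisymm ?_
  rintro p ⟨hpf, hpg⟩
  refine hB.mem_closure_iff.2 fun V (hV : IsClopen V) hpV => ?_
  by_contra hempty
  obtain ⟨e, he⟩ := exists_zeroSet_eq_of_isClopen (hV.preimage hi)
  have hlocal {k : Cc X} (hk : p ∈ closure (i '' zeroSet k)) :
      p ∈ closure (i '' zeroSet (k * k + e * e)) := by
    rw [zeroSet_mul_self_add_mul_self, he, image_inter_preimage, inter_comm]
    exact hV.isOpen.inter_closure ⟨hpV, hk⟩
  have hdisj : Disjoint (zeroSet (f * f + e * e)) (zeroSet (g * g + e * e)) := by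
    simp only [zeroSet_mul_self_add_mul_self, he]
    refine disjoint_left.2 ?_
    rintro x ⟨hxf, hxV⟩ ⟨hxg, -⟩
    exact hempty ⟨i x, hxV, mem_image_of_mem i ⟨hxf, hxg⟩⟩
  exact disjoint_left.1 (disjoint_closure_image_zeroSet hext hdisj) (hlocal hpf) (hlocal hpg)

theorem exists_forall_mem_closure_image_zeroSet [CompactSpace B] (i : X → B) {I : Ideal (Cc X)}
    (hI : I ≠ ⊤) : ∃ p : B, ∀ f ∈ I, p ∈ closure (i '' zeroSet f) := by
  have hdirected : Directed (· ⊇ ·) fun f : I => closure (i '' zeroSet (f : Cc X)) := by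
    intro f g
    obtain ⟨h, hh, hZ⟩ := exists_mem_ideal_zeroSet_eq_inter f.2 g.2
    exact ⟨⟨h, hh⟩, closure_mono (image_mono (hZ.subset.trans inter_subset_left)),
      closure_mono (image_mono (hZ.subset.trans inter_subset_right))⟩
  obtain ⟨p, hp⟩ := IsCompact.nonempty_iInter_of_directed_nonempty_isCompact_isClosed _ hdirected
    (fun f => ((zeroSet_nonempty_of_mem_ideal hI f.2).image i).closure)
    (fun _ => isClosed_closure.isCompact) (fun _ => isClosed_closure)
  exact ⟨p, fun f hf => mem_iInter.1 hp ⟨f, hf⟩⟩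

end Closure

section MaximalIdeal

variable {X B : Type*} [TopologicalSpace X] [TopologicalSpace B] {i : X → B}
  (hB : IsTopologicalBasis {s : Set B | IsClopen s}) (hi : Continuous i) (hd : DenseRange i)
  (hext : ∀ g : X → Bool, Continuous g → ∃ G : B → Bool, Continuous G ∧ ∀ x : X, G (i x) = g x)

/-- The ideal `M^p_c` of the functions in `C_c(X)` whose zero-set has `p` in its closure, the
closure being that of the image under `i : X → B`. -/
def idealAt (p : B) : Ideal (Cc X) where
  carrier := {f | p ∈ closure (i '' zeroSet f)}
  zero_mem' := by
    rw [mem_ofPred_eq, zeroSet_zero, image_univ]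
    exact hd p
  add_mem' {f g} hf hg :=
    closure_mono (image_mono (zeroSet_inter_subset_zeroSet_add f g))
      ((closure_image_zeroSet_inter hB hi hext f g).superset ⟨hf, hg⟩)
  smul_mem' c f hf := closure_mono (image_mono (zeroSet_subset_zeroSet_mul_left c f)) hf

theorem mem_idealAt {p : B} {f : Cc X} :
    f ∈ idealAt hB hi hd hext p ↔ p ∈ closure (i '' zeroSet f) := Iff.rfl

theorem mem_idealAt_iff_of_zeroSet_eq {V : Set B} (hV : IsClopen V) {e : Cc X}
    (he : zeroSet e = i ⁻¹' V) {p : B} : e ∈ idealAt hB hi hd hext p ↔ p ∈ V := by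
  rw [mem_idealAt, he, closure_image_preimage_of_isClopen hd hV]

theorem idealAt_ne_top (p : B) : idealAt hB hi hd hext p ≠ ⊤ := by
  rw [Ideal.ne_top_iff_one, mem_idealAt, isUnit_iff_zeroSet_eq_empty.1 isUnit_one]
  simp

theorem idealAt_isMaximal (p : B) : (idealAt hB hi hd hext p).IsMaximal := by
  refine ⟨idealAt_ne_top hB hi hd hext p, fun J hJ => ?_⟩
  obtain ⟨hle, f, hfJ, hf⟩ := SetLike.lt_iff_le_and_exists.1 hJ
  obtain ⟨V, hV, hpV, hVf⟩ : ∃ V : Set B, IsClopen V ∧ p ∈ V ∧ Disjoint V (i '' zeroSet f) := by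
    simpa [mem_idealAt, hB.mem_closure_iff, not_nonempty_iff_eq_empty,
      ← disjoint_iff_inter_eq_empty] using hf
  obtain ⟨e, he⟩ := exists_zeroSet_eq_of_isClopen (hV.preimage hi)
  have heJ : e ∈ J := hle ((mem_idealAt_iff_of_zeroSet_eq hB hi hd hext hV he).2 hpV)
  refine ideal_eq_top_of_disjoint_zeroSet hfJ heJ ?_
  rw [he]
  exact disjoint_image_left.1 hVf.symm

theorem idealAt_injective [T0Space B] : Function.Injective (idealAt hB hi hd hext) := by
  intro p q hpq
  refine hB.eq_iff.2 fun V (hV : IsClopen V) => ?_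
  obtain ⟨e, he⟩ := exists_zeroSet_eq_of_isClopen (hV.preimage hi)
  rw [← mem_idealAt_iff_of_zeroSet_eq hB hi hd hext hV he, hpq,
    mem_idealAt_iff_of_zeroSet_eq hB hi hd hext hV he]

theorem exists_eq_idealAt [CompactSpace B] {I : Ideal (Cc X)} (hI : I.IsMaximal) :
    ∃ p : B, I = idealAt hB hi hd hext p := by
  obtain ⟨p, hp⟩ := exists_forall_mem_closure_image_zeroSet i hI.ne_top
  exact ⟨p, hI.eq_of_le (idealAt_ne_top hB hi hd hext p) hp⟩

end MaximalIdeal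

end Cc

theorem stmt_2_general {X B : Type*} [TopologicalSpace X] [TopologicalSpace B] [CompactSpace B]
    [T0Space B] (hB : IsTopologicalBasis {s : Set B | IsClopen s})
    {i : X → B} (hi : Continuous i) (hd : DenseRange i)
    (hext : ∀ g : X → Bool, Continuous g →
      ∃ G : B → Bool, Continuous G ∧ ∀ x : X, G (i x) = g x) :
    (∀ p : B, ∃ I : Ideal (Cc X), I.IsMaximal ∧
        (I : Set (Cc X)) = {f : Cc X | p ∈ closure (i '' ((f : C(X, ℝ)) ⁻¹' {0}))}) ∧
    (∀ I : Ideal (Cc X), I.IsMaximal →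
        ∃! p : B, (I : Set (Cc X)) =
          {f : Cc X | p ∈ closure (i '' ((f : C(X, ℝ)) ⁻¹' {0}))}) := by
  refine ⟨fun p => ⟨_, Cc.idealAt_isMaximal hB hi hd hext p, rfl⟩, fun I hI => ?_⟩
  obtain ⟨p, rfl⟩ := Cc.exists_eq_idealAt hB hi hd hext hI
  exact ⟨p, rfl, fun q hq => Cc.idealAt_injective hB hi hd hext (SetLike.coe_injective hq.symm)⟩

/-- Gelfand–Kolmogoroff for `C_c`: for every point `p` of the Banaschewski
compactification `B` of the zero-dimensional space `X`, the set
`M^p_c = {f ∈ C_c(X) : p ∈ cl_B Z(f)}` is a maximal ideal of `C_c(X)`, and every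
maximal ideal of `C_c(X)` equals `M^p_c` for exactly one `p ∈ B`. -/
theorem stmt_2 {B : Type*} [TopologicalSpace B] [CompactSpace B] [T2Space B]
    (hB : IsTopologicalBasis {s : Set B | IsClopen s})
    (X : Set B) (hd : Dense X)
    (hext : ∀ g : X → Bool, Continuous g → ∃ G : B → Bool, Continuous G ∧ ∀ x : X, G x = g x) :
    (∀ p : B, ∃ I : Ideal (Cc X), I.IsMaximal ∧
        (I : Set (Cc X)) =
          {f : Cc X | p ∈ closure (Subtype.val '' (((f : C(X, ℝ)) : X → ℝ) ⁻¹' {0}))}) ∧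
    (∀ I : Ideal (Cc X), I.IsMaximal →
        ∃! p : B, (I : Set (Cc X)) =
          {f : Cc X | p ∈ closure (Subtype.val '' (((f : C(X, ℝ)) : X → ℝ) ⁻¹' {0}))}) := by
  exact stmt_2_general hB continuous_subtype_val hd.denseRange_val hext
end

section
/- Let X be a zero-dimensional space with Banaschewski compactification bX. A function f ∈ C_c(X) has compact support if and only if every point p ∈ bX ∖ X lies in the interior (taken in bX) of the closure (taken in bX) of Z(f); that is, C_c^K(X) = O_c^{bX∖X}. -/
open Set TopologicalSpace

/-!
Let `Z` be a zero-set in a space `X` densely embedded in `B`. Since `Z` is closed in `X`, the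
interior of `cl_B Z` is exactly the complement of `cl_B (X ∖ Z)`. It therefore contains `B ∖ X` if
and only if `cl_B (X ∖ Z)` lies in `X`, which for compact Hausdorff `B` says that `X ∖ Z` has
compact closure in `X`.
-/

section

variable {X B M : Type*} [TopologicalSpace B] {e : X → B}

theorem compl_closure_image_compl_subset_interior_closure_image (he : DenseRange e) (s : Set X) :
    (closure (e '' sᶜ))ᶜ ⊆ interior (closure (e '' s)) := by
  have hcover : closure (e '' s) ∪ closure (e '' sᶜ) = univ := by
    rw [← closure_union, ← image_union, union_compl_self, image_univ, he.closure_range]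
  exact interior_maximal (compl_subset_iff_union.2 (by rwa [union_comm]))
    isClosed_closure.isOpen_compl

variable [TopologicalSpace X]

theorem disjoint_interior_closure_image_closure_image_compl (he : Topology.IsInducing e)
    {s : Set X} (hs : IsClosed s) :
    Disjoint (interior (closure (e '' s))) (closure (e '' sᶜ)) := by
  have hpreimage : e ⁻¹' closure (e '' s) = s := by
    rw [← he.closure_eq_preimage_closure_image, hs.closure_eq]
  have hdisj : Disjoint (closure (e '' s)) (e '' sᶜ) := by
    rw [disjoint_image_right, hpreimage]
    exact disjoint_compl_right
  exact (hdisj.mono_left interior_subset).closure_right isOpen_interior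

theorem interior_closure_image_eq_compl_closure_image_compl (he : IsDenseInducing e) {s : Set X}
    (hs : IsClosed s) : interior (closure (e '' s)) = (closure (e '' sᶜ))ᶜ :=
  (disjoint_interior_closure_image_closure_image_compl he.isInducing hs).subset_compl_right.antisymm
    (compl_closure_image_compl_subset_interior_closure_image he.dense s)

theorem isCompact_closure_iff_closure_image_subset_range [CompactSpace B] [T2Space B]
    (he : Topology.IsInducing e) {t : Set X} :
    IsCompact (closure t) ↔ closure (e '' t) ⊆ range e := by
  constructor
  · intro ht
    have hclosed : IsClosed (e '' closure t) := (ht.image he.continuous).isClosed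
    exact (closure_minimal (image_mono subset_closure) hclosed).trans (image_subset_range e _)
  · intro ht
    rw [he.isCompact_iff, he.closure_eq_preimage_closure_image, image_preimage_eq_of_subset ht]
    exact isClosed_closure.isCompact

theorem stmt_3_general [CompactSpace B] [T2Space B] [TopologicalSpace M] [T1Space M] [Zero M]
    (he : IsDenseInducing e) {f : X → M} (hf : Continuous f) :
    HasCompactSupport f ↔ (range e)ᶜ ⊆ interior (closure (e '' (f ⁻¹' {0}))) := by
  have hZ : IsClosed (f ⁻¹' {0}) := isClosed_singleton.preimage hf
  rw [interior_closure_image_eq_compl_closure_image_compl he hZ, compl_subset_compl]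
  exact isCompact_closure_iff_closure_image_subset_range he.isInducing

end

/-- For a zero-dimensional space `X` with Banaschewski compactification `B`,
a function `f ∈ C_c(X)` has compact support iff every `p ∈ B ∖ X` lies in
`int_B cl_B Z(f)`; i.e., `C_c^K(X) = O_c^{B∖X}`. -/
theorem stmt_3 {B : Type*} [TopologicalSpace B] [CompactSpace B] [T2Space B]
    (hB : IsTopologicalBasis {s : Set B | IsClopen s})
    (X : Set B) (hd : Dense X)
    (hext : ∀ g : X → Bool, Continuous g → ∃ G : B → Bool, Continuous G ∧ ∀ x : X, G x = g x)
    (f : X → ℝ) (hf : Continuous f) (hfc : (Set.range f).Countable) :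
    IsCompact (closure {x : X | f x ≠ 0}) ↔
      ∀ p ∈ Xᶜ, p ∈ interior (closure (Subtype.val '' (f ⁻¹' {0}))) := by
  have hX : IsDenseInducing (Subtype.val : X → B) := ⟨.subtypeVal, hd.denseRange_val⟩
  exact (stmt_3_general hX hf).trans (by rw [Subtype.range_coe]; rfl)
end

section
/- Let X be a zero-dimensional space with Banaschewski compactification bX, and let υX ⊆ bX be the copy of the N-compactification υ₀X of X inside bX. A subset A ⊆ X is relatively pseudocompact with respect to C_c(X) if and only if the closure of A in bX is contained in υX. -/
open Set TopologicalSpace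

/-- The copy of the `ℕ`-compactification `υ₀X` inside the Banaschewski compactification:
points all of whose countable families of clopen neighborhoods have intersection meeting `X`. -/
def upsilon {B : Type*} [TopologicalSpace B] (X : Set B) : Set B :=
  {p | ∀ V : ℕ → Set B, (∀ n, IsClopen (V n) ∧ p ∈ V n) → ((⋂ n, V n) ∩ X).Nonempty}

/-!
Both conditions are equivalent to a nested-set property inside `X`: every decreasing sequence of
clopen sets that all meet `A` has a common point.

For `C_c(X)`, a decreasing sequence of clopen sets without a common point gives a continuous
integer-valued function, the first index at which a point leaves the sequence, and it is unbounded
on `A` if all the sets meet `A`. Conversely, a function with countable range omits levels between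
any two reals, so if it is unbounded on `A`, the superlevel sets of its absolute value at omitted
levels tending to infinity are clopen, meet `A` and have no common point.

For the compactification, clopen sets of `X` are exactly the traces of clopen sets of `bX`, and
by compactness the closures of the traces on `A` of a decreasing sequence meet in a point of
`closure A`.
-/

section RelPseudocompact

variable {Y : Type*} [TopologicalSpace Y] {A : Set Y}

/-- Relative pseudocompactness of `A` with respect to `C_c(Y)`: every continuous real function on
`Y` with countable range is bounded on `A`. -/
def IsRelPseudocompact (A : Set Y) : Prop :=
  ∀ f : Y → ℝ, Continuous f → (range f).Countable → ∃ M : ℝ, ∀ x ∈ A, |f x| ≤ M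

/-- The nested clopen set property of `A` in `Y`, the link between `C_c(Y)` and compactifications
of `Y`. The common point is only required to lie in `Y`, not in `A`. -/
def HasNestedClopenProperty (A : Set Y) : Prop :=
  ∀ W : ℕ → Set Y, Antitone W → (∀ n, IsClopen (W n)) → (∀ n, (A ∩ W n).Nonempty) →
    (⋂ n, W n).Nonempty

lemma continuous_natFind {p : Y → ℕ → Prop} [∀ y, DecidablePred (p y)]
    (hp : ∀ n, IsClopen {y | p y n}) (h : ∀ y, ∃ n, p y n) :
    Continuous fun y => Nat.find (h y) := by
  refine continuous_discrete_rng.2 fun n => ?_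
  have fiber_eq : (fun y => Nat.find (h y)) ⁻¹' {n} =
      {y | p y n} ∩ ⋂ m ∈ Iio n, {y | p y m}ᶜ := by
    ext y
    simp [Nat.find_eq_iff]
  rw [fiber_eq]
  exact (hp n).isOpen.inter ((finite_Iio n).isOpen_biInter fun m _ => (hp m).compl.isOpen)

lemma isClopen_setOf_lt_of_notMem_range {α : Type*} [TopologicalSpace α] [LinearOrder α]
    [OrderClosedTopology α] {g : Y → α} (hg : Continuous g) {r : α} (hr : r ∉ range g) :
    IsClopen {y | r < g y} := by
  have lt_iff_le (y : Y) : r < g y ↔ r ≤ g y :=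
    ⟨le_of_lt, fun h => h.lt_of_ne fun e => hr ⟨y, e.symm⟩⟩
  refine ⟨?_, isOpen_lt continuous_const hg⟩
  simpa only [lt_iff_le] using isClosed_le continuous_const hg

lemma exists_mem_Ioo_isClopen_setOf_lt {g : Y → ℝ} (hg : Continuous g)
    (hcount : (range g).Countable) {a b : ℝ} (hab : a < b) :
    ∃ r ∈ Ioo a b, IsClopen {y | r < g y} := by
  obtain ⟨r, hr, hrab⟩ :=
    (hcount.dense_compl ℝ).exists_mem_open isOpen_Ioo (nonempty_Ioo.2 hab)
  exact ⟨r, hrab, isClopen_setOf_lt_of_notMem_range hg hr⟩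

lemma IsRelPseudocompact.hasNestedClopenProperty (hA : IsRelPseudocompact A) :
    HasNestedClopenProperty A := by
  classical
  intro W hanti hclopen hmeet
  by_contra hempty
  have exits (y : Y) : ∃ n, y ∉ W n := by
    by_contra! hy
    exact hempty ⟨y, mem_iInter.2 hy⟩
  let exitIndex (y : Y) : ℕ := Nat.find (exits y)
  have hcont : Continuous exitIndex := continuous_natFind (fun n => (hclopen n).compl) exits
  have hcount : (range fun y => (exitIndex y : ℝ)).Countable :=
    (countable_range ((↑) : ℕ → ℝ)).mono (range_comp_subset_range exitIndex _)
  obtain ⟨M, hM⟩ := hA _ (continuous_of_discreteTopology.comp hcont) hcount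
  obtain ⟨N, hN⟩ := exists_nat_ge M
  obtain ⟨x, hxA, hxW⟩ := hmeet N
  have exit_le : exitIndex x ≤ N :=
    Nat.cast_le.1 ((le_abs_self _).trans ((hM x hxA).trans hN))
  exact Nat.find_spec (exits x) (hanti exit_le hxW)

lemma HasNestedClopenProperty.isRelPseudocompact (hA : HasNestedClopenProperty A) :
    IsRelPseudocompact A := by
  intro f hf hcount
  by_contra! hunbounded
  have hcount_abs : (range fun x => |f x|).Countable := by
    simpa only [← range_comp'] using hcount.image abs
  choose r hr hclopen using fun n : ℕ =>
    exists_mem_Ioo_isClopen_setOf_lt hf.abs hcount_abs (lt_add_one (n : ℝ))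
  have hr_mono : Monotone r := monotone_nat_of_le_succ fun n =>
    ((hr n).2.trans (by exact_mod_cast (hr (n + 1)).1)).le
  obtain ⟨y, hy⟩ := hA (fun n => {x | r n < |f x|})
    (fun _ _ hmn _ hx => (hr_mono hmn).trans_lt hx) hclopen (fun n => hunbounded (r n))
  obtain ⟨n, hn⟩ := exists_nat_ge |f y|
  exact (hn.trans_lt (hr n).1).not_gt (mem_iInter.1 hy n)

theorem isRelPseudocompact_iff_hasNestedClopenProperty :
    IsRelPseudocompact A ↔ HasNestedClopenProperty A :=
  ⟨IsRelPseudocompact.hasNestedClopenProperty, HasNestedClopenProperty.isRelPseudocompact⟩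

end RelPseudocompact

section Compactification

variable {Y B : Type*} [TopologicalSpace Y] [TopologicalSpace B] {e : Y → B} {A : Set Y}

lemma exists_isClopen_preimage_eq
    (hext : ∀ g : Y → Bool, Continuous g → ∃ G : B → Bool, Continuous G ∧ ∀ y, G (e y) = g y)
    {W : Set Y} (hW : IsClopen W) : ∃ V : Set B, IsClopen V ∧ e ⁻¹' V = W := by
  obtain ⟨G, hG, hGe⟩ := hext W.boolIndicator ((continuous_boolIndicator_iff_isClopen W).2 hW)
  refine ⟨G ⁻¹' {true}, (isClopen_discrete _).preimage hG, ?_⟩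
  ext y
  rw [mem_preimage, mem_preimage, hGe, mem_singleton_iff, ← mem_iff_boolIndicator]

lemma HasNestedClopenProperty.closure_image_subset_upsilon (hA : HasNestedClopenProperty A)
    (he : Continuous e) : closure (e '' A) ⊆ upsilon (range e) := by
  intro p hp V hV
  have hclopen (n : ℕ) : IsClopen (dissipate V n) :=
    (finite_Iic n).isClopen_biInter fun m _ => (hV m).1
  have hmeet (n : ℕ) : (A ∩ e ⁻¹' dissipate V n).Nonempty := by
    have hpn : p ∈ dissipate V n := mem_iInter₂.2 fun m _ => (hV m).2
    obtain ⟨_, hyV, x, hxA, rfl⟩ := mem_closure_iff.1 hp _ (hclopen n).isOpen hpn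
    exact ⟨x, hxA, hyV⟩
  obtain ⟨y, hy⟩ := hA (fun n => e ⁻¹' dissipate V n)
    (fun _ _ hmn => preimage_mono (antitone_dissipate hmn))
    (fun n => (hclopen n).preimage he) hmeet
  rw [← preimage_iInter, iInter_dissipate] at hy
  exact ⟨e y, hy, mem_range_self y⟩

lemma hasNestedClopenProperty_of_closure_image_subset_upsilon [CompactSpace B]
    (hext : ∀ g : Y → Bool, Continuous g → ∃ G : B → Bool, Continuous G ∧ ∀ y, G (e y) = g y)
    (hA : closure (e '' A) ⊆ upsilon (range e)) : HasNestedClopenProperty A := by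
  intro W hanti hclopen hmeet
  choose V hV hVW using fun n => exists_isClopen_preimage_eq hext (hclopen n)
  obtain ⟨p, hp⟩ := IsCompact.nonempty_iInter_of_sequence_nonempty_isCompact_isClosed
    (fun n => closure (e '' (A ∩ W n)))
    (fun n => closure_mono (image_mono (inter_subset_inter_right A (hanti n.le_succ))))
    (fun n => ((hmeet n).image e).closure) isClosed_closure.isCompact
    (fun _ => isClosed_closure)
  rw [mem_iInter] at hp
  have hpA : p ∈ closure (e '' A) := closure_mono (image_mono inter_subset_left) (hp 0)
  have hpV (n : ℕ) : p ∈ V n := by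
    refine closure_minimal (image_subset_iff.2 ?_) (hV n).isClosed (hp n)
    exact inter_subset_right.trans (hVW n).ge
  obtain ⟨_, hyV, y, rfl⟩ := hA hpA V fun n => ⟨hV n, hpV n⟩
  exact ⟨y, mem_iInter.2 fun n => (hVW n).le (mem_iInter.1 hyV n)⟩

theorem stmt_4_general [CompactSpace B] (he : Continuous e)
    (hext : ∀ g : Y → Bool, Continuous g → ∃ G : B → Bool, Continuous G ∧ ∀ y, G (e y) = g y)
    (A : Set Y) : IsRelPseudocompact A ↔ closure (e '' A) ⊆ upsilon (range e) := by
  rw [isRelPseudocompact_iff_hasNestedClopenProperty]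
  exact ⟨fun hA => hA.closure_image_subset_upsilon he,
    hasNestedClopenProperty_of_closure_image_subset_upsilon hext⟩

end Compactification

/-- A subset `A ⊆ X` is relatively pseudocompact with respect to `C_c(X)`
iff `cl_B A ⊆ υX`. -/
theorem stmt_4 {B : Type*} [TopologicalSpace B] [CompactSpace B] [T2Space B]
    (hB : IsTopologicalBasis {s : Set B | IsClopen s})
    (X : Set B) (hd : Dense X)
    (hext : ∀ g : X → Bool, Continuous g → ∃ G : B → Bool, Continuous G ∧ ∀ x : X, G x = g x)
    (A : Set X) :
    (∀ f : X → ℝ, Continuous f → (Set.range f).Countable →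
        ∃ M : ℝ, ∀ x ∈ A, |f x| ≤ M) ↔
      closure (Subtype.val '' A) ⊆ upsilon X := by
  simpa only [IsRelPseudocompact, Subtype.range_coe] using
    stmt_4_general continuous_subtype_val hext A
end

section
/- Let X be a zero-dimensional space with Banaschewski compactification bX, and let υX ⊆ bX be the copy of the N-compactification υ₀X of X inside bX. For f ∈ C_c(X), if bX ∖ υX is contained in the closure (taken in bX) of Z(f), then bX ∖ υX is contained in the interior (taken in bX) of the closure (taken in bX) of Z(f). -/
/-!
A point `p ∉ υX` lies in every term of a decreasing sequence of clopen sets `V n` whose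
intersection misses `X`, and the traces of the `V n` on `X` are locally finite. If `p` is in the
closure of an open set `O`, choose nonempty clopen sets `W n ⊆ V n ∩ O`. By local finiteness the
trace `C` of their union is clopen in `X`, while compactness puts a point of `⋂ n, V n`, hence one
outside `υX`, into the closure of `C`. For `O` the complement of `cl Z`, such a point would be in
the closures of both `C` and `Z`, but a clopen subset of `X` and its complement in `X` have disjoint
closures in `bX`.
-/

open Set TopologicalSpace

theorem locallyFinite_of_antitone_of_iInter_eq_empty {Y ι : Type*} [TopologicalSpace Y]
    [LinearOrder ι] [LocallyFiniteOrderBot ι] {V : ι → Set Y} (hV : Antitone V)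
    (hclosed : ∀ i, IsClosed (V i)) (hempty : ⋂ i, V i = ∅) : LocallyFinite V := by
  intro y
  obtain ⟨i, hi⟩ := iInter_eq_empty_iff.1 hempty y
  refine ⟨(V i)ᶜ, (hclosed i).isOpen_compl.mem_nhds hi, (finite_Iio i).subset ?_⟩
  rintro j ⟨z, hzj, hzi⟩
  exact not_le.1 fun hij => hzi (hV hij hzj)

theorem isClopen_iUnion_of_locallyFinite {Y ι : Type*} [TopologicalSpace Y] {W : ι → Set Y}
    (hlf : LocallyFinite W) (hW : ∀ i, IsClopen (W i)) : IsClopen (⋃ i, W i) :=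
  ⟨hlf.isClosed_iUnion fun i => (hW i).isClosed, isOpen_iUnion fun i => (hW i).isOpen⟩

theorem disjoint_closure_image_of_isClopen {Y B : Type*} [TopologicalSpace Y] [TopologicalSpace B]
    {e : Y → B}
    (hext : ∀ g : Y → Bool, Continuous g → ∃ G : B → Bool, Continuous G ∧ ∀ y, G (e y) = g y)
    {C : Set Y} (hC : IsClopen C) : Disjoint (closure (e '' C)) (closure (e '' Cᶜ)) := by
  obtain ⟨G, hG, hGe⟩ := hext _ ((continuous_boolIndicator_iff_isClopen C).2 hC)
  have hsub {D : Set Y} {b : Bool} (hD : ∀ y ∈ D, C.boolIndicator y = b) :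
      closure (e '' D) ⊆ G ⁻¹' {b} :=
    closure_minimal (image_subset_iff.2 fun y hy => (hGe y).trans (hD y hy))
      ((isClosed_discrete _).preimage hG)
  have hdisj : Disjoint (G ⁻¹' {true}) (G ⁻¹' {false}) :=
    (disjoint_singleton.2 Bool.false_ne_true.symm).preimage G
  exact hdisj.mono (hsub fun y => (mem_iff_boolIndicator C y).1)
    (hsub fun y => (notMem_iff_boolIndicator C y).1)

section Upsilon

variable {B : Type*} [TopologicalSpace B] {X : Set B} {p : B}

theorem notMem_upsilon_iff_exists_antitone :
    p ∉ upsilon X ↔ ∃ V : ℕ → Set B,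
      Antitone V ∧ (∀ n, IsClopen (V n)) ∧ p ∈ ⋂ n, V n ∧ Disjoint (⋂ n, V n) X := by
  constructor
  · intro hp
    simp only [upsilon, mem_ofPred_eq, not_forall, not_nonempty_iff_eq_empty,
      ← disjoint_iff_inter_eq_empty] at hp
    obtain ⟨U, hU, hUX⟩ := hp
    refine ⟨dissipate U, antitone_dissipate,
      fun n => (finite_Iic n).isClopen_biInter fun k _ => (hU k).1, ?_, ?_⟩
    · rw [iInter_dissipate]
      exact mem_iInter.2 fun n => (hU n).2
    · rwa [iInter_dissipate]
  · rintro ⟨V, -, hV, hpV, hVX⟩ hp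
    exact not_disjoint_iff_nonempty_inter.2 (hp V fun n => ⟨hV n, mem_iInter.1 hpV n⟩) hVX

theorem exists_isClopen_closure_inter_compl_upsilon_nonempty [CompactSpace B]
    (hB : IsTopologicalBasis {s : Set B | IsClopen s}) (hX : Dense X) (hp : p ∉ upsilon X)
    {O : Set B} (hO : IsOpen O) (hpO : p ∈ closure O) :
    ∃ C : Set X, IsClopen C ∧ Subtype.val '' C ⊆ O ∧
      (closure (Subtype.val '' C) ∩ (upsilon X)ᶜ).Nonempty := by
  obtain ⟨V, hanti, hV, hpV, hVX⟩ := notMem_upsilon_iff_exists_antitone.1 hp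
  have hexists (n : ℕ) : ∃ W : Set B, IsClopen W ∧ W.Nonempty ∧ W ⊆ V n ∩ O := by
    obtain ⟨x, hx⟩ := mem_closure_iff.1 hpO (V n) (hV n).isOpen (mem_iInter.1 hpV n)
    obtain ⟨W, hW, hxW, hWsub⟩ := hB.exists_subset_of_mem_open hx ((hV n).isOpen.inter hO)
    exact ⟨W, hW, ⟨x, hxW⟩, hWsub⟩
  choose W hW hWne hWsub using hexists
  have hlf : LocallyFinite fun n => (Subtype.val ⁻¹' V n : Set X) := by
    refine locallyFinite_of_antitone_of_iInter_eq_empty (fun _ _ h => preimage_mono (hanti h))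
      (fun n => (hV n).isClosed.preimage continuous_subtype_val) ?_
    rw [← preimage_iInter]
    exact preimage_eq_empty (by rwa [Subtype.range_val])
  let C : Set X := ⋃ n, Subtype.val ⁻¹' W n
  have hC : IsClopen C := isClopen_iUnion_of_locallyFinite
    (hlf.subset fun n => preimage_mono ((hWsub n).trans inter_subset_left))
    fun n => (hW n).preimage continuous_subtype_val
  have hCO : Subtype.val '' C ⊆ O := image_subset_iff.2 <| iUnion_subset fun n =>
    preimage_mono ((hWsub n).trans inter_subset_right)
  have hmeet (n : ℕ) : (closure (Subtype.val '' C) ∩ V n).Nonempty := by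
    obtain ⟨x, hxW, hxX⟩ := hX.inter_open_nonempty (W n) (hW n).isOpen (hWne n)
    exact ⟨x, subset_closure ⟨⟨x, hxX⟩, mem_iUnion.2 ⟨n, hxW⟩, rfl⟩, (hWsub n hxW).1⟩
  obtain ⟨q, hq⟩ : (⋂ n, closure (Subtype.val '' C) ∩ V n).Nonempty :=
    IsCompact.nonempty_iInter_of_directed_nonempty_isCompact_isClosed _
      (Antitone.directed_ge fun _ _ h => inter_subset_inter_right _ (hanti h)) hmeet
      (fun n => (isClosed_closure.inter (hV n).isClosed).isCompact)
      (fun n => isClosed_closure.inter (hV n).isClosed)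
  rw [← inter_iInter] at hq
  have hqX : q ∉ upsilon X :=
    notMem_upsilon_iff_exists_antitone.2 ⟨V, hanti, hV, hq.2, hVX⟩
  exact ⟨C, hC, hCO, q, hq.1, hqX⟩

theorem stmt_6_general [CompactSpace B] (hB : IsTopologicalBasis {s : Set B | IsClopen s})
    (hX : Dense X)
    (hext : ∀ g : X → Bool, Continuous g → ∃ G : B → Bool, Continuous G ∧ ∀ x : X, G x = g x)
    {Z : Set X} (hZ : (upsilon X)ᶜ ⊆ closure (Subtype.val '' Z)) :
    (upsilon X)ᶜ ⊆ interior (closure (Subtype.val '' Z)) := by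
  intro p hp
  by_contra hpint
  rw [← mem_compl_iff, ← closure_compl] at hpint
  obtain ⟨C, hC, hCsub, q, hqC, hq⟩ := exists_isClopen_closure_inter_compl_upsilon_nonempty hB hX hp
    isClosed_closure.isOpen_compl hpint
  have hZC : Z ⊆ Cᶜ := fun z hz hzC =>
    hCsub (mem_image_of_mem _ hzC) (subset_closure (mem_image_of_mem _ hz))
  exact (disjoint_closure_image_of_isClopen hext hC).notMem_of_mem_left hqC
    (closure_mono (image_mono hZC) (hZ hq))

end Upsilon

/-- For `f ∈ C_c(X)`, if `B ∖ υX ⊆ cl_B Z(f)` then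
`B ∖ υX ⊆ int_B cl_B Z(f)`. -/
theorem stmt_6 {B : Type*} [TopologicalSpace B] [CompactSpace B] [T2Space B]
    (hB : IsTopologicalBasis {s : Set B | IsClopen s})
    (X : Set B) (hd : Dense X)
    (hext : ∀ g : X → Bool, Continuous g → ∃ G : B → Bool, Continuous G ∧ ∀ x : X, G x = g x)
    (f : X → ℝ) (hf : Continuous f) (hfc : (Set.range f).Countable)
    (h : (upsilon X)ᶜ ⊆ closure (Subtype.val '' (f ⁻¹' {0}))) :
    (upsilon X)ᶜ ⊆ interior (closure (Subtype.val '' (f ⁻¹' {0}))) :=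
  stmt_6_general hB hd hext h
end

section
/- Let X be a zero-dimensional space with Banaschewski compactification bX, and let υX ⊆ bX be the copy of the N-compactification υ₀X of X inside bX. For f ∈ C_c(X), the following are equivalent: (i) the support cl_X(X ∖ Z(f)) is pseudocompact; (ii) bX ∖ υX is contained in the closure in bX of Z(f); (iii) bX ∖ υX is contained in the interior in bX of the closure in bX of Z(f). In other words, C_c^ψ(X) = M_c^{bX∖υX} = O_c^{bX∖υX}. -/
open Set TopologicalSpace

/-!
A sequence `U n` of clopen sets covering a pseudocompact set has a finite subcover: the least `n`
with `x ∈ U n` is locally constant in `x`, hence bounded. If `p ∉ υX` is witnessed by clopen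
neighborhoods `V n` with no common point in `X`, then finitely many of the `(V n)ᶜ` cover the
support, so the corresponding finite intersection of the `V n` is a neighborhood of `p` which meets
`X` inside the zero-set.

Conversely, an unbounded continuous function on the support yields a locally finite sequence of
nonempty clopen sets in `X` disjoint from the zero-set. Its tail unions are clopen and decrease to
`∅`. Their clopen extensions to `B` share a point by compactness; this point is not in `υX`, and it
is separated from the zero-set.
-/

section LocallyFinite

variable {ι Y : Type*} [TopologicalSpace Y]

lemma locallyFinite_setOf_natCast_lt {R : Type*} [Semiring R] [LinearOrder R]
    [IsStrictOrderedRing R] [Archimedean R] [TopologicalSpace R] [OrderClosedTopology R]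
    {g : Y → R} (hg : Continuous g) : LocallyFinite fun n : ℕ => {y | (n : R) < g y} := by
  intro y
  obtain ⟨N, hN⟩ := exists_nat_gt (g y)
  refine ⟨{z | g z < N}, (isOpen_lt hg continuous_const).mem_nhds hN, (finite_lt_nat N).subset ?_⟩
  rintro n ⟨z, hnz, hzN⟩
  exact Nat.cast_lt.1 (hnz.trans hzN)

lemma locallyFinite_image_of_isInducing {Z : Type*} [TopologicalSpace Z] {e : Y → Z}
    (he : Topology.IsInducing e) (hrange : IsClosed (range e)) {s : ι → Set Y}
    (hs : LocallyFinite s) : LocallyFinite fun i => e '' s i := by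
  intro z
  by_cases hz : z ∈ range e
  · obtain ⟨y, rfl⟩ := hz
    obtain ⟨t, ht, hfin⟩ := hs y
    obtain ⟨t', ht', hsub⟩ := he.nhds_eq_comap y ▸ ht
    refine ⟨t', ht', hfin.subset ?_⟩
    rintro i ⟨_, ⟨w, hw, rfl⟩, hwt⟩
    exact ⟨w, hw, hsub hwt⟩
  · refine ⟨(range e)ᶜ, hrange.isOpen_compl.mem_nhds hz, finite_empty.subset ?_⟩
    rintro i ⟨_, ⟨w, -, rfl⟩, hw⟩
    exact hw (mem_range_self w)

lemma isClopen_biUnion_of_locallyFinite {s : ι → Set Y} (hs : LocallyFinite s)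
    (hc : ∀ i, IsClopen (s i)) (t : Set ι) : IsClopen (⋃ i ∈ t, s i) := by
  refine ⟨?_, isOpen_biUnion fun i _ => (hc i).isOpen⟩
  rw [biUnion_eq_iUnion]
  exact (hs.comp_injective Subtype.val_injective).isClosed_iUnion fun i => (hc i).isClosed

lemma iInter_biUnion_Ici_eq_empty_of_locallyFinite [Preorder ι] [IsDirectedOrder ι] [Nonempty ι]
    [NoMaxOrder ι] {s : ι → Set Y} (hs : LocallyFinite s) : ⋂ i, ⋃ j ∈ Ici i, s j = ∅ := by
  refine eq_empty_of_forall_notMem fun y hy => ?_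
  obtain ⟨b, hb⟩ := (hs.point_finite y).bddAbove
  obtain ⟨i, hbi⟩ := exists_gt b
  obtain ⟨j, hij, hyj⟩ := mem_iUnion₂.1 (mem_iInter.1 hy i)
  exact (hbi.trans_le hij).not_ge (hb hyj)

end LocallyFinite

section Pseudocompact

variable {Y : Type*} [TopologicalSpace Y]

/-- A set is pseudocompact if every continuous real-valued function on it, as a subspace, is
bounded. -/
def IsPseudocompact (S : Set Y) : Prop :=
  ∀ h : S → ℝ, Continuous h → ∃ M : ℝ, ∀ y, |h y| ≤ M

lemma IsPseudocompact.exists_subset_biUnion_lt {S : Set Y} (hS : IsPseudocompact S)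
    {U : ℕ → Set Y} (hU : ∀ n, IsClopen (U n)) (hSU : S ⊆ ⋃ n, U n) :
    ∃ N, S ⊆ ⋃ n < N, U n := by
  classical
  let US : ℕ → Set S := fun n => Subtype.val ⁻¹' U n
  have hUS (n : ℕ) : IsClopen (US n) := (hU n).preimage continuous_subtype_val
  have hex (y : S) : ∃ n, y ∈ US n :=
    show ∃ n, y.1 ∈ U n from mem_iUnion.1 (hSU y.2)
  let firstIndex : S → ℕ := fun y => Nat.find (hex y)
  have hcont : Continuous firstIndex := continuous_discrete_rng.2 fun n => by
    rw [preimage_find_eq_disjointed US hex]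
    exact (disjointedRec (fun _ k ht => IsClopen.diff ht (hUS k)) (hUS n)).isOpen
  obtain ⟨M, hM⟩ := hS (fun y => firstIndex y) (continuous_of_discreteTopology.comp hcont)
  obtain ⟨N, hN⟩ := exists_nat_gt M
  have hlt (y : S) : firstIndex y < N :=
    Nat.cast_lt.1 (((le_abs_self _).trans (hM y)).trans_lt hN)
  exact ⟨N, fun y hy =>
    mem_iUnion₂.2 ⟨firstIndex ⟨y, hy⟩, hlt ⟨y, hy⟩, Nat.find_spec (hex ⟨y, hy⟩)⟩⟩

lemma exists_locallyFinite_isOpen_of_not_isPseudocompact_closure {U : Set Y} (hU : IsOpen U)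
    (hps : ¬ IsPseudocompact (closure U)) :
    ∃ W : ℕ → Set Y, LocallyFinite W ∧ ∀ n, IsOpen (W n) ∧ (W n).Nonempty ∧ W n ⊆ U := by
  simp only [IsPseudocompact, not_forall, not_exists, not_le] at hps
  obtain ⟨h, hh, hunb⟩ := hps
  let T : ℕ → Set (closure U) := fun n => {y | (n : ℝ) < |h y|}
  have hT : LocallyFinite fun n => Subtype.val '' T n :=
    locallyFinite_image_of_isInducing .subtypeVal
      (Subtype.range_coe ▸ isClosed_closure) (locallyFinite_setOf_natCast_lt hh.abs)
  refine ⟨fun n => U ∩ Subtype.val '' T n, hT.subset fun n => inter_subset_right, fun n => ?_⟩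
  obtain ⟨O, hO, hOT⟩ : ∃ O, IsOpen O ∧ Subtype.val ⁻¹' O = T n :=
    isOpen_induced_iff.1 (isOpen_lt continuous_const hh.abs)
  have htrace : U ∩ Subtype.val '' T n = U ∩ O := by
    rw [← hOT, Subtype.image_preimage_coe, ← inter_assoc, inter_eq_left.2 subset_closure]
  have hne : (U ∩ O).Nonempty := by
    obtain ⟨y, hy⟩ := hunb n
    have hyO : y ∈ (Subtype.val ⁻¹' O : Set (closure U)) := hOT ▸ hy
    exact inter_comm O U ▸ mem_closure_iff.1 y.2 O hO hyO
  simp only [htrace]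
  exact ⟨hU.inter hO, hne, inter_subset_left⟩

lemma exists_antitone_isClopen_of_not_isPseudocompact_closure
    (hY : IsTopologicalBasis {s : Set Y | IsClopen s}) {U : Set Y} (hU : IsOpen U)
    (hps : ¬ IsPseudocompact (closure U)) :
    ∃ W : ℕ → Set Y, Antitone W ∧ (∀ n, IsClopen (W n) ∧ (W n).Nonempty ∧ W n ⊆ U) ∧
      ⋂ n, W n = ∅ := by
  obtain ⟨O, hO, hOU⟩ := exists_locallyFinite_isOpen_of_not_isPseudocompact_closure hU hps
  have hclopen (n : ℕ) : ∃ C, IsClopen C ∧ C.Nonempty ∧ C ⊆ O n := by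
    obtain ⟨hOo, ⟨y, hy⟩, -⟩ := hOU n
    obtain ⟨C, hC, hyC, hCO⟩ := hY.exists_subset_of_mem_open hy hOo
    exact ⟨C, hC, ⟨y, hyC⟩, hCO⟩
  choose C hC hCne hCO using hclopen
  have hCfin : LocallyFinite C := hO.subset hCO
  refine ⟨fun n => ⋃ k ∈ Ici n, C k,
    fun m n hmn => biUnion_subset_biUnion_left (Ici_subset_Ici.2 hmn),
    fun n => ⟨isClopen_biUnion_of_locallyFinite hCfin hC _, ?_, ?_⟩,
    iInter_biUnion_Ici_eq_empty_of_locallyFinite hCfin⟩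
  · exact (hCne n).mono (subset_biUnion_of_mem (u := C) self_mem_Ici)
  · exact iUnion₂_subset fun k _ => (hCO k).trans (hOU k).2.2

end Pseudocompact

section Upsilon

variable {B : Type*} [TopologicalSpace B] {X : Set B}

lemma notMem_upsilon_iff {p : B} :
    p ∉ upsilon X ↔ ∃ V : ℕ → Set B, (∀ n, IsClopen (V n) ∧ p ∈ V n) ∧
      ⋂ n, (Subtype.val ⁻¹' V n : Set X) = ∅ := by
  simp only [upsilon, mem_ofPred_eq, not_forall, exists_prop, not_nonempty_iff_eq_empty,
    ← preimage_iInter, Subtype.preimage_coe_eq_empty, inter_comm]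

lemma compl_upsilon_subset_interior_closure (hd : Dense X) {Z : Set X}
    (hps : IsPseudocompact (closure Zᶜ)) :
    (upsilon X)ᶜ ⊆ interior (closure (Subtype.val '' Z)) := by
  intro p hp
  obtain ⟨V, hV, hempty⟩ := notMem_upsilon_iff.1 hp
  obtain ⟨N, hN⟩ := hps.exists_subset_biUnion_lt
    (U := fun n => (Subtype.val ⁻¹' V n)ᶜ)
    (fun n => ((hV n).1.preimage continuous_subtype_val).compl)
    (by rw [← compl_iInter, hempty, compl_empty]; exact subset_univ _)
  let O : Set B := ⋂ n < N, V n
  have hO : IsOpen O := (finite_lt_nat N).isOpen_biInter fun n _ => (hV n).1.isOpen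
  have hOZ : O ∩ X ⊆ Subtype.val '' Z := by
    rintro x ⟨hxO, hxX⟩
    refine ⟨⟨x, hxX⟩, by_contra fun hxZ => ?_, rfl⟩
    obtain ⟨n, hn, hxn⟩ := mem_iUnion₂.1 (hN (subset_closure hxZ))
    exact hxn (mem_iInter₂.1 hxO n hn)
  exact mem_interior.2 ⟨O, (hd.open_subset_closure_inter hO).trans (closure_mono hOZ), hO,
    mem_iInter₂.2 fun n _ => (hV n).2⟩

lemma exists_isClopen_preimage_val_eq
    (hext : ∀ g : X → Bool, Continuous g → ∃ G : B → Bool, Continuous G ∧ ∀ x : X, G x = g x)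
    {W : Set X} (hW : IsClopen W) : ∃ V : Set B, IsClopen V ∧ Subtype.val ⁻¹' V = W := by
  obtain ⟨G, hG, hGW⟩ := hext _ ((continuous_boolIndicator_iff_isClopen W).2 hW)
  refine ⟨G ⁻¹' {true}, (isClopen_discrete _).preimage hG, ?_⟩
  rw [← preimage_comp, show G ∘ Subtype.val = W.boolIndicator from funext hGW,
    preimage_boolIndicator_true]

lemma exists_isClopen_mem_notMem_upsilon [CompactSpace B]
    (hext : ∀ g : X → Bool, Continuous g → ∃ G : B → Bool, Continuous G ∧ ∀ x : X, G x = g x)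
    {W : ℕ → Set X} (hanti : Antitone W) (hW : ∀ n, IsClopen (W n)) (hne : ∀ n, (W n).Nonempty)
    (hempty : ⋂ n, W n = ∅) :
    ∃ p ∉ upsilon X, ∃ V : Set B, IsClopen V ∧ p ∈ V ∧ Subtype.val ⁻¹' V = W 0 := by
  choose V hV hVW using fun n => exists_isClopen_preimage_val_eq hext (hW n)
  have hfip (u : Finset ℕ) : (⋂ n ∈ u, V n).Nonempty := by
    obtain ⟨x, hx⟩ := hne (u.sup id)
    refine ⟨x, mem_iInter₂.2 fun n hn => ?_⟩
    have hxn : x ∈ W n := hanti (Finset.le_sup (f := id) hn) hx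
    rwa [← hVW n] at hxn
  obtain ⟨p, hp⟩ := CompactSpace.iInter_nonempty (fun n => (hV n).isClosed) hfip
  rw [mem_iInter] at hp
  exact ⟨p, notMem_upsilon_iff.2 ⟨V, fun n => ⟨hV n, hp n⟩, by simpa only [hVW] using hempty⟩,
    V 0, hV 0, hp 0, hVW 0⟩

lemma isTopologicalBasis_isClopen_of_isInducing {Y : Type*} [TopologicalSpace Y]
    (hB : IsTopologicalBasis {s : Set B | IsClopen s}) {e : Y → B} (he : Topology.IsInducing e) :
    IsTopologicalBasis {s : Set Y | IsClopen s} :=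
  (hB.isInducing he).of_isOpen_of_subset (fun _ hs => hs.isOpen) <|
    image_subset_iff.2 fun _ hs => hs.preimage he.continuous

lemma isPseudocompact_closure_compl_of_compl_upsilon_subset [CompactSpace B]
    (hB : IsTopologicalBasis {s : Set B | IsClopen s})
    (hext : ∀ g : X → Bool, Continuous g → ∃ G : B → Bool, Continuous G ∧ ∀ x : X, G x = g x)
    {Z : Set X} (hZ : IsClosed Z) (hsub : (upsilon X)ᶜ ⊆ closure (Subtype.val '' Z)) :
    IsPseudocompact (closure Zᶜ) := by
  by_contra hps
  obtain ⟨W, hanti, hW, hempty⟩ := exists_antitone_isClopen_of_not_isPseudocompact_closure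
    (isTopologicalBasis_isClopen_of_isInducing hB .subtypeVal) hZ.isOpen_compl hps
  obtain ⟨p, hp, V, hV, hpV, hVW⟩ := exists_isClopen_mem_notMem_upsilon hext hanti
    (fun n => (hW n).1) (fun n => (hW n).2.1) hempty
  obtain ⟨_, hzV, z, hzZ, rfl⟩ := mem_closure_iff.1 (hsub hp) V hV.isOpen hpV
  have hzW : z ∈ W 0 := hVW ▸ hzV
  exact (hW 0).2.2 hzW hzZ

end Upsilon

theorem stmt_7_general {B : Type*} [TopologicalSpace B] [CompactSpace B]
    (hB : IsTopologicalBasis {s : Set B | IsClopen s}) {X : Set B} (hd : Dense X)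
    (hext : ∀ g : X → Bool, Continuous g → ∃ G : B → Bool, Continuous G ∧ ∀ x : X, G x = g x)
    {Z : Set X} (hZ : IsClosed Z) :
    (IsPseudocompact (closure Zᶜ) ↔ (upsilon X)ᶜ ⊆ closure (Subtype.val '' Z)) ∧
    ((upsilon X)ᶜ ⊆ closure (Subtype.val '' Z) ↔
      (upsilon X)ᶜ ⊆ interior (closure (Subtype.val '' Z))) := by
  have hinterior := compl_upsilon_subset_interior_closure hd (Z := Z)
  have hpseudo := isPseudocompact_closure_compl_of_compl_upsilon_subset hB hext hZ
  exact ⟨⟨fun h => (hinterior h).trans interior_subset, hpseudo⟩,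
    ⟨fun h => hinterior (hpseudo h), fun h => h.trans interior_subset⟩⟩

/-- For `f ∈ C_c(X)`, the following are equivalent:
(i) the support `cl_X (X ∖ Z(f))` is pseudocompact;
(ii) `B ∖ υX ⊆ cl_B Z(f)`;
(iii) `B ∖ υX ⊆ int_B cl_B Z(f)`.
That is, `C_c^ψ(X) = M_c^{B∖υX} = O_c^{B∖υX}`. -/
theorem stmt_7 {B : Type*} [TopologicalSpace B] [CompactSpace B] [T2Space B]
    (hB : IsTopologicalBasis {s : Set B | IsClopen s})
    (X : Set B) (hd : Dense X)
    (hext : ∀ g : X → Bool, Continuous g → ∃ G : B → Bool, Continuous G ∧ ∀ x : X, G x = g x)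
    (f : X → ℝ) (hf : Continuous f) (hfc : (Set.range f).Countable) :
    ((∀ h : (closure {x : X | f x ≠ 0}) → ℝ, Continuous h → ∃ M : ℝ, ∀ y, |h y| ≤ M) ↔
        (upsilon X)ᶜ ⊆ closure (Subtype.val '' (f ⁻¹' {0}))) ∧
    ((upsilon X)ᶜ ⊆ closure (Subtype.val '' (f ⁻¹' {0})) ↔
        (upsilon X)ᶜ ⊆ interior (closure (Subtype.val '' (f ⁻¹' {0})))) :=
  stmt_7_general hB hd hext (isClosed_singleton.preimage hf)
end

section
/- Let X be a zero-dimensional space with Banaschewski compactification bX. No point p ∈ bX ∖ X is a G_δ point of bX; that is, for p ∈ bX ∖ X, the singleton {p} is not the intersection of countably many open subsets of bX. -/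
open Set TopologicalSpace

/-!
In a locally compact Hausdorff space, a `G_δ` point `p` has a countably generated neighbourhood
filter. If `p ∈ closure X \ X` and the space has a clopen basis, the trace of this filter on `X` is
proper and free and has a countable clopen basis, which may be thinned out to a strictly
decreasing sequence. The index at which a point leaves that sequence is then a continuous map
`X → ℕ` sending the trace exactly to `atTop`. Its parity is a continuous map `X → Bool` oscillating
at `p`, so it has no continuous extension.
-/

open Filter Topology

section ClopenFiltration

variable {Y : Type*}

lemma exists_nat_forall_preimage_Ioi_eq {W : ℕ → Set Y} (hW : Antitone W)
    (hinter : ⋂ n, W n = ∅) : ∃ f : Y → ℕ, ∀ n, f ⁻¹' Ioi n = W n := by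
  classical
  have hexit (y : Y) : ∃ n, y ∉ W n := by
    have hy : y ∉ ⋂ n, W n := hinter ▸ notMem_empty y
    simpa only [mem_iInter, not_forall] using hy
  refine ⟨fun y => Nat.find (hexit y), fun n => ext fun y => ?_⟩
  simp only [mem_preimage, mem_Ioi, Nat.lt_find_iff, not_not]
  exact ⟨fun h => h n le_rfl, fun hy m hmn => hW hmn hy⟩

lemma continuous_nat_of_isClopen_preimage_Ioi [TopologicalSpace Y] {f : Y → ℕ}
    (hf : ∀ n, IsClopen (f ⁻¹' Ioi n)) : Continuous f := by
  rw [continuous_discrete_rng]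
  rintro (_ | n)
  · convert (hf 0).compl.isOpen using 1
    ext y
    simp
  · convert ((hf n).diff (hf (n + 1))).isOpen using 1
    ext y
    simp only [mem_preimage, mem_singleton_iff, Set.mem_sdiff, mem_Ioi]
    lia

lemma exists_antitone_subbasis_diff_nonempty {L : Filter Y} [L.NeBot] (hker : L.ker = ∅)
    {V : ℕ → Set Y} (hV : L.HasAntitoneBasis V) :
    ∃ φ : ℕ → ℕ, L.HasAntitoneBasis (V ∘ φ) ∧ ∀ n, (V (φ n) \ V (φ (n + 1))).Nonempty := by
  have hdiff (m : ℕ) : ∀ᶠ n in atTop, (V m \ V n).Nonempty := by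
    obtain ⟨y, hym⟩ := L.nonempty_of_mem (hV.mem m)
    obtain ⟨k, hyk⟩ : ∃ k, y ∉ V k := by
      have hy : y ∉ L.ker := hker ▸ notMem_empty y
      simpa [hV.1.ker] using hy
    filter_upwards [eventually_ge_atTop k] with n hkn
    exact ⟨y, hym, fun hyn => hyk (hV.antitone hkn hyn)⟩
  obtain ⟨φ, -, hφ, hbasis⟩ := hV.subbasis_with_rel hdiff
  exact ⟨φ, hbasis, fun n => hφ n.lt_succ_self⟩

variable [TopologicalSpace Y] {L : Filter Y} [L.NeBot] [L.IsCountablyGenerated]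
  {ι : Sort*} {q : ι → Prop} {s : ι → Set Y}

lemma exists_continuous_nat_map_eq_atTop (hL : L.HasBasis q s) (hs : ∀ i, q i → IsClopen (s i))
    (hker : L.ker = ∅) : ∃ f : Y → ℕ, Continuous f ∧ map f L = atTop := by
  obtain ⟨i, hi, hbasis⟩ := hL.exists_antitone_subbasis
  obtain ⟨φ, hφ, hdiff⟩ := exists_antitone_subbasis_diff_nonempty hker hbasis
  have hinter : ⋂ n, s (i (φ n)) = ∅ := by simpa [hφ.1.ker] using hker
  obtain ⟨f, hf⟩ := exists_nat_forall_preimage_Ioi_eq hφ.antitone hinter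
  have hcomap : L = comap f atTop :=
    hφ.1.eq_of_same_basis (by simpa only [hf] using atTop_basis_Ioi.comap f)
  have hrange : Ioi 0 ⊆ range f := by
    rintro (_ | n) hn
    · exact absurd hn (lt_irrefl 0)
    · obtain ⟨y, hy, hy'⟩ := hdiff n
      have hlt : n < f y := (hf n).ge hy
      have hle : f y ≤ n + 1 := not_lt.1 fun h => hy' ((hf (n + 1)).le h)
      exact ⟨y, by lia⟩
  refine ⟨f, continuous_nat_of_isClopen_preimage_Ioi fun n => ?_, ?_⟩
  · exact (hf n).symm ▸ hs _ (hi _)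
  · rw [hcomap, map_comap_of_mem (mem_of_superset (Ioi_mem_atTop 0) hrange)]

lemma exists_continuous_bool_forall_not_tendsto (hL : L.HasBasis q s)
    (hs : ∀ i, q i → IsClopen (s i)) (hker : L.ker = ∅) :
    ∃ g : Y → Bool, Continuous g ∧ ∀ b, ¬ Tendsto g L (𝓝 b) := by
  obtain ⟨f, hf, hmap⟩ := exists_continuous_nat_map_eq_atTop hL hs hker
  have hbodd_cont : Continuous Nat.bodd := continuous_of_discreteTopology
  refine ⟨Nat.bodd ∘ f, hbodd_cont.comp hf, fun b hb => ?_⟩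
  have hbodd : ∀ᶠ n in atTop, Nat.bodd n = b := by
    rw [← hmap, eventually_map]
    simpa only [nhds_discrete, tendsto_pure, Function.comp_apply] using hb
  obtain ⟨n, hn, hn'⟩ := (hbodd.and ((tendsto_add_atTop_nat 1).eventually hbodd)).exists
  rw [Nat.bodd_succ, hn] at hn'
  exact Bool.not_ne_self b hn'

end ClopenFiltration

lemma isCountablyGenerated_nhds_of_isGδ_singleton {B : Type*} [TopologicalSpace B]
    [WeaklyLocallyCompactSpace B] [R1Space B] {p : B} (hp : IsGδ {p}) :
    (𝓝 p).IsCountablyGenerated := by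
  obtain ⟨U, hU, hpU⟩ := isGδ_iff_eq_iInter_nat.1 hp
  have hUp (n : ℕ) : U n ∈ 𝓝 p := (hU n).mem_nhds (mem_iInter.1 (hpU.le rfl) n)
  obtain ⟨K, hK, hKp⟩ := exists_compact_mem_nhds p
  choose F hFp hFclosed hFU using fun n => exists_mem_nhds_isClosed_subset (hUp n)
  let L : Filter B := 𝓟 K ⊓ ⨅ n, 𝓟 (F n)
  have hFL (n : ℕ) : F n ∈ L := mem_inf_of_right (mem_iInf_of_mem n (mem_principal_self _))
  have hcluster (x : B) (hx : ClusterPt x L) : x = p := by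
    have hxU : x ∈ ⋂ n, U n :=
      mem_iInter.2 fun n => hFU n <|
        (hFclosed n).closure_subset (hx.mem_closure_of_mem _ (hFL n))
    exact hpU.ge hxU
  have hLp : L = 𝓝 p := le_antisymm
    (hK.le_nhds_of_unique_clusterPt (mem_inf_of_left (mem_principal_self K))
      fun x _ => hcluster x)
    (le_inf (le_principal_iff.2 hKp) (le_iInf fun n => le_principal_iff.2 (hFp n)))
  rw [← hLp]
  infer_instance

theorem not_isCountablyGenerated_nhds_of_mem_closure_diff {B : Type*} [TopologicalSpace B]
    [T1Space B] (hB : IsTopologicalBasis {s : Set B | IsClopen s}) (X : Set B)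
    (hext : ∀ g : X → Bool, Continuous g → ∃ G : B → Bool, Continuous G ∧ ∀ x : X, G x = g x)
    {p : B} (hp : p ∈ closure X \ X) : ¬ (𝓝 p).IsCountablyGenerated := by
  intro _
  have : (comap ((↑) : X → B) (𝓝 p)).NeBot := mem_closure_iff_comap_neBot.1 hp.1
  have hker : (comap ((↑) : X → B) (𝓝 p)).ker = ∅ := by
    rw [ker_comap, ker_nhds, preimage_eq_empty_iff]
    simpa using hp.2
  obtain ⟨g, hg, hlim⟩ := exists_continuous_bool_forall_not_tendsto
    (hB.nhds_hasBasis.comap _) (fun s hs => hs.1.preimage continuous_subtype_val) hker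
  obtain ⟨G, hG, hGg⟩ := hext g hg
  exact hlim (G p) (((hG.tendsto p).comp tendsto_comap).congr hGg)

theorem stmt_11_general {B : Type*} [TopologicalSpace B] [WeaklyLocallyCompactSpace B] [T2Space B]
    (hB : IsTopologicalBasis {s : Set B | IsClopen s}) (X : Set B)
    (hext : ∀ g : X → Bool, Continuous g → ∃ G : B → Bool, Continuous G ∧ ∀ x : X, G x = g x) :
    ∀ p ∈ closure X \ X, ¬ IsGδ {p} := fun _ hp hGδ =>
  not_isCountablyGenerated_nhds_of_mem_closure_diff hB X hext hp
    (isCountablyGenerated_nhds_of_isGδ_singleton hGδ)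

/-- No point of `B ∖ X` is a `G_δ` point of the Banaschewski
compactification `B` of the zero-dimensional space `X`. -/
theorem stmt_11 {B : Type*} [TopologicalSpace B] [CompactSpace B] [T2Space B]
    (hB : IsTopologicalBasis {s : Set B | IsClopen s})
    (X : Set B) (hd : Dense X)
    (hext : ∀ g : X → Bool, Continuous g → ∃ G : B → Bool, Continuous G ∧ ∀ x : X, G x = g x) :
    ∀ p ∈ Xᶜ, ¬ ∃ U : ℕ → Set B, (∀ n, IsOpen (U n)) ∧ ({p} : Set B) = ⋂ n, U n :=
  fun p hp hU => stmt_11_general hB X hext p ⟨hd p, hp⟩ (isGδ_iff_eq_iInter_nat.2 hU)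
end

section
/- Let X be a locally compact, N-compact zero-dimensional space with Banaschewski compactification bX. Then the remainder bX ∖ X, with the subspace topology, is an almost P-space. -/
/-!
Let `p ∉ X` lie in a `G_δ` set of the remainder. The coordinates of a closed embedding `X → ℕ^ι`
cannot all converge at `p`, so some continuous `f : X → ℕ` has no limit at `p`, and `p` avoids the
clopen extension of each fibre of `f`. Hence `p` lies in a `G_δ` set of `B` that misses `X`, and the
given `G_δ` set of the remainder contains one of `B`, say `H ∋ p`.

Shrink compact neighbourhoods `V n` of `p` to a subset of `H`, and choose a nonempty compact open
set `K n` of `X` inside each `V n`. As the `V n` shrink to a set outside `X`, the `K n` are locally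
finite in `X`, so their union is clopen in `X` and extends to a clopen set `C` of `B`. By
compactness `C` meets `⋂ n, V n`, hence leaves `X`. By density
`C ⊆ closure (⋃ m, K m) ⊆ (⋃ m < n, K m) ∪ V n` for every `n`, so the part of `C` outside `X` is
contained in `⋂ n, V n ⊆ H`.
-/

open Set TopologicalSpace

universe u v

/-- A topological space is an almost `P`-space if every nonempty `G_δ` subset has
nonempty interior. -/
def AlmostPSpace (Y : Type*) [TopologicalSpace Y] : Prop :=
  ∀ G : Set Y, (∃ U : ℕ → Set Y, (∀ n, IsOpen (U n)) ∧ G = ⋂ n, U n) →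
    G.Nonempty → (interior G).Nonempty

open Filter Topology

section General

variable {Y : Type*} [TopologicalSpace Y]

/-- The nonempty compact open sets form a `π`-base: every nonempty open set contains one. For
zero-dimensional spaces this is a weak form of local compactness. -/
def HasCompactOpenPiBase (Y : Type*) [TopologicalSpace Y] : Prop :=
  ∀ U : Set Y, IsOpen U → U.Nonempty → ∃ K ⊆ U, IsCompact K ∧ IsOpen K ∧ K.Nonempty

lemma hasCompactOpenPiBase_of_totallyDisconnectedSpace [LocallyCompactSpace Y] [T2Space Y]
    [TotallyDisconnectedSpace Y] : HasCompactOpenPiBase Y := by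
  rintro U hU ⟨x, hx⟩
  obtain ⟨L, hL, hxL, hLU⟩ := exists_compact_subset hU hx
  obtain ⟨K, hK, hxK, hKL⟩ :=
    loc_compact_Haus_tot_disc_of_zero_dim.exists_subset_of_mem_open hxL isOpen_interior
  have hKL : K ⊆ L := hKL.trans interior_subset
  exact ⟨K, hKL.trans hLU, hL.of_isClosed_subset hK.isClosed hKL, hK.isOpen, x, hxK⟩

lemma locallyFinite_of_subset_antitone {V K : ℕ → Set Y} (hV : ∀ n, IsClosed (V n))
    (hanti : Antitone V) (hempty : ⋂ n, V n = ∅) (hKV : ∀ n, K n ⊆ V n) : LocallyFinite K := by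
  intro x
  obtain ⟨n, hn⟩ : ∃ n, x ∉ V n := by
    simpa only [mem_iInter, not_forall] using eq_empty_iff_forall_notMem.1 hempty x
  refine ⟨(V n)ᶜ, (hV n).isOpen_compl.mem_nhds hn, (finite_lt_nat n).subset ?_⟩
  rintro m ⟨y, hyK, hyV⟩
  exact not_le.1 fun hnm => hyV (hanti hnm (hKV m hyK))

lemma iUnion_subset_biUnion_union_of_antitone {α : Type*} {V K : ℕ → Set α} (hanti : Antitone V)
    (hKV : ∀ n, K n ⊆ V n) (n : ℕ) : ⋃ m, K m ⊆ (⋃ m ∈ Iio n, K m) ∪ V n := by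
  refine iUnion_subset fun m => ?_
  rcases lt_or_ge m n with hmn | hnm
  · exact (subset_biUnion_of_mem (u := K) (mem_Iio.2 hmn)).trans subset_union_left
  · exact ((hKV m).trans (hanti hnm)).trans subset_union_right

lemma exists_antitone_isCompact_nhds_of_isGδ [LocallyCompactSpace Y] [T2Space Y] {H : Set Y}
    (hH : IsGδ H) {p : Y} (hp : p ∈ H) :
    ∃ V : ℕ → Set Y, Antitone V ∧ (∀ n, IsCompact (V n)) ∧ (∀ n, V n ∈ 𝓝 p) ∧ ⋂ n, V n ⊆ H := by
  obtain ⟨O, hO, rfl⟩ := hH.eq_iInter_nat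
  have hL (n : ℕ) : ∃ L ∈ 𝓝 p, L ⊆ O n ∧ IsCompact L :=
    local_compact_nhds ((hO n).mem_nhds (mem_iInter.1 hp n))
  choose L hLp hLO hLc using hL
  refine ⟨fun n => ⋂ m ∈ Iic n, L m, fun a b hab =>
    biInter_subset_biInter_left (Iic_subset_Iic.2 hab), fun n => ?_, fun n =>
    (biInter_mem (finite_Iic n)).2 fun m _ => hLp m, ?_⟩
  · exact (hLc n).of_isClosed_subset (isClosed_biInter fun m _ => (hLc m).isClosed)
      (biInter_subset_of_mem self_mem_Iic)
  · exact iInter_mono fun n => (biInter_subset_of_mem self_mem_Iic).trans (hLO n)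

end General

section Remainder

variable {B : Type*} [TopologicalSpace B] {X : Set B}

/-- `X` is `2`-embedded in `B`: every continuous function from `X` to the discrete two-point space
extends continuously to `B`. -/
def TwoEmbedded (X : Set B) : Prop :=
  ∀ g : X → Bool, Continuous g → ∃ G : B → Bool, Continuous G ∧ ∀ x : X, G x = g x

/-- `X` is `G_δ`-closed in `B`: every point outside `X` lies in a `G_δ` set of `B` that misses
`X`. -/
def IsGδClosed (X : Set B) : Prop :=
  ∀ p ∉ X, ∃ H : Set B, IsGδ H ∧ p ∈ H ∧ Disjoint H X

lemma TwoEmbedded.exists_isClopen_preimage_eq (hX : TwoEmbedded X) {S : Set X} (hS : IsClopen S) :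
    ∃ C : Set B, IsClopen C ∧ ((↑) : X → B) ⁻¹' C = S := by
  obtain ⟨G, hG, hGS⟩ := hX S.boolIndicator ((continuous_boolIndicator_iff_isClopen S).2 hS)
  refine ⟨G ⁻¹' {true}, (isClopen_discrete _).preimage hG, ?_⟩
  ext x
  rw [mem_preimage, mem_preimage, hGS, mem_singleton_iff, ← mem_iff_boolIndicator]

lemma TwoEmbedded.exists_isGδ_of_forall_not_tendsto {Y : Type*} [TopologicalSpace Y]
    [DiscreteTopology Y] [Countable Y] (hX : TwoEmbedded X) {f : X → Y} (hf : Continuous f) {p : B}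
    (hfp : ∀ y, ¬ Tendsto f (comap ((↑) : X → B) (𝓝 p)) (𝓝 y)) :
    ∃ H : Set B, IsGδ H ∧ p ∈ H ∧ Disjoint H X := by
  choose C hC hCf using fun y =>
    hX.exists_isClopen_preimage_eq ((isClopen_discrete {y}).preimage hf)
  refine ⟨⋂ y, (C y)ᶜ, .iInter_of_isOpen fun y => (hC y).compl.isOpen, ?_, ?_⟩
  · refine mem_iInter.2 fun y hpC => hfp y ?_
    rw [nhds_discrete Y, tendsto_pure]
    exact ⟨C y, (hC y).isOpen.mem_nhds hpC, (hCf y).subset⟩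
  · refine disjoint_left.2 fun x hxH hxX => mem_iInter.1 hxH (f ⟨x, hxX⟩) ?_
    exact (hCf (f ⟨x, hxX⟩)).superset (mem_singleton (f ⟨x, hxX⟩))

lemma mem_of_isClosedEmbedding_of_tendsto [T2Space B] {Z : Type*} [TopologicalSpace Z] {e : X → Z}
    (he : IsClosedEmbedding e) {p : B} (hp : p ∈ closure X) {z : Z}
    (hz : Tendsto e (comap ((↑) : X → B) (𝓝 p)) (𝓝 z)) : p ∈ X := by
  have : (comap ((↑) : X → B) (𝓝 p)).NeBot := mem_closure_iff_comap_neBot.1 hp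
  obtain ⟨x, rfl⟩ : z ∈ range e :=
    he.isClosed_range.mem_of_tendsto hz (.of_forall mem_range_self)
  have hx : comap ((↑) : X → B) (𝓝 p) ≤ 𝓝 x := he.isInducing.tendsto_nhds_iff.2 hz
  have hpx : p = x :=
    tendsto_nhds_unique tendsto_comap ((continuous_subtype_val.tendsto x).mono_left hx)
  exact hpx ▸ x.2

lemma TwoEmbedded.isGδClosed_of_isClosedEmbedding_pi [T2Space B] {ι : Type*} {Y : ι → Type*}
    [∀ i, TopologicalSpace (Y i)] [∀ i, DiscreteTopology (Y i)] [∀ i, Countable (Y i)]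
    (hX : TwoEmbedded X) (hd : Dense X) {e : X → ∀ i, Y i} (he : IsClosedEmbedding e) :
    IsGδClosed X := by
  intro p hp
  obtain ⟨i, hi⟩ : ∃ i, ∀ y, ¬ Tendsto (e · i) (comap ((↑) : X → B) (𝓝 p)) (𝓝 y) := by
    by_contra! h
    choose z hz using h
    exact hp (mem_of_isClosedEmbedding_of_tendsto he (hd p) (tendsto_pi_nhds.2 hz))
  exact hX.exists_isGδ_of_forall_not_tendsto ((continuous_apply i).comp he.continuous) hi

lemma IsGδClosed.exists_isGδ_of_remainder (hX : IsGδClosed X) {G : Set (Xᶜ : Set B)}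
    (hG : IsGδ G) {p : (Xᶜ : Set B)} (hp : p ∈ G) :
    ∃ H : Set B, IsGδ H ∧ ↑p ∈ H ∧ Disjoint H X ∧ (↑) ⁻¹' H ⊆ G := by
  obtain ⟨U, hU, rfl⟩ := hG.eq_iInter_nat
  choose O hO hOU using fun n => isOpen_induced_iff.1 (hU n)
  obtain rfl : (fun n => (↑) ⁻¹' O n) = U := funext hOU
  obtain ⟨H, hH, hpH, hHX⟩ := hX p p.2
  refine ⟨(⋂ n, O n) ∩ H, (IsGδ.iInter_of_isOpen hO).inter hH, ⟨?_, hpH⟩,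
    hHX.mono_left inter_subset_right, ?_⟩
  · rwa [← preimage_iInter] at hp
  · rw [← preimage_iInter]
    exact preimage_mono inter_subset_left

lemma subset_biUnion_union_of_preimage_eq_iUnion [T2Space B] (hd : Dense X) {C : Set B}
    (hC : IsOpen C) {V : ℕ → Set B} (hV : ∀ n, IsClosed (V n)) (hanti : Antitone V)
    {K : ℕ → Set X} (hK : ∀ n, IsCompact (K n)) (hKV : ∀ n, (↑) '' K n ⊆ V n)
    (hCK : (↑) ⁻¹' C = ⋃ n, K n) (n : ℕ) : C ⊆ (⋃ m ∈ Iio n, (↑) '' K m) ∪ V n := by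
  have hCX : C ∩ X = ⋃ m, (↑) '' K m := by
    rw [← image_iUnion, ← hCK, Subtype.image_preimage_coe, inter_comm]
  have hclosed : IsClosed ((⋃ m ∈ Iio n, ((↑) : X → B) '' K m) ∪ V n) :=
    ((finite_Iio n).isClosed_biUnion fun m _ =>
      ((hK m).image continuous_subtype_val).isClosed).union (hV n)
  calc C ⊆ closure (C ∩ X) := hd.open_subset_closure_inter hC
    _ = closure (⋃ m, (↑) '' K m) := by rw [hCX]
    _ ⊆ (⋃ m ∈ Iio n, (↑) '' K m) ∪ V n :=
      closure_minimal (iUnion_subset_biUnion_union_of_antitone hanti hKV n) hclosed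

lemma TwoEmbedded.exists_isClopen_diff_subset [T2Space B] (hX : TwoEmbedded X) (hd : Dense X)
    {V : ℕ → Set B} (hV : ∀ n, IsCompact (V n)) (hanti : Antitone V)
    (hVX : Disjoint (⋂ n, V n) X) {K : ℕ → Set X} (hKc : ∀ n, IsCompact (K n))
    (hKo : ∀ n, IsOpen (K n)) (hKne : ∀ n, (K n).Nonempty) (hKV : ∀ n, (↑) '' K n ⊆ V n) :
    ∃ C : Set B, IsClopen C ∧ (C \ X).Nonempty ∧ C \ X ⊆ ⋂ n, V n := by
  have hVc (n : ℕ) : IsClosed (V n) := (hV n).isClosed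
  have hKlf : LocallyFinite K :=
    locallyFinite_of_subset_antitone (fun n => (hVc n).preimage continuous_subtype_val)
      (fun _ _ hmn => preimage_mono (hanti hmn))
      (by rw [← preimage_iInter, Subtype.preimage_coe_eq_empty, inter_comm, hVX.inter_eq])
      (fun n => image_subset_iff.1 (hKV n))
  obtain ⟨C, hC, hCK⟩ := hX.exists_isClopen_preimage_eq
    ⟨hKlf.isClosed_iUnion fun n => (hKc n).isClosed, isOpen_iUnion hKo⟩
  refine ⟨C, hC, ?_, ?_⟩
  · have hCV (n : ℕ) : (C ∩ V n).Nonempty := by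
      obtain ⟨x, hx⟩ := hKne n
      exact ⟨x, hCK.superset (mem_iUnion_of_mem n hx), hKV n (mem_image_of_mem _ hx)⟩
    obtain ⟨q, hq⟩ := IsCompact.nonempty_iInter_of_sequence_nonempty_isCompact_isClosed
      (fun n => C ∩ V n) (fun n => inter_subset_inter_right _ (hanti n.le_succ)) hCV
      ((hV 0).inter_left hC.isClosed) (fun n => hC.isClosed.inter (hVc n))
    rw [← inter_iInter] at hq
    exact ⟨q, hq.1, disjoint_left.1 hVX hq.2⟩
  · rintro q ⟨hqC, hqX⟩
    refine mem_iInter.2 fun n =>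
      (subset_biUnion_union_of_preimage_eq_iUnion hd hC.isOpen hVc hanti hKc hKV hCK n
        hqC).resolve_left fun hqK => ?_
    obtain ⟨m, -, x, -, rfl⟩ := mem_iUnion₂.1 hqK
    exact hqX x.2

lemma HasCompactOpenPiBase.exists_image_subset (hπ : HasCompactOpenPiBase X) (hd : Dense X)
    {V : Set B} (hV : (interior V).Nonempty) :
    ∃ K : Set X, IsCompact K ∧ IsOpen K ∧ K.Nonempty ∧ (↑) '' K ⊆ V := by
  obtain ⟨x, hxV, hxX⟩ := hd.inter_open_nonempty _ isOpen_interior hV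
  obtain ⟨K, hKV, hKc, hKo, hKne⟩ :=
    hπ _ (isOpen_interior.preimage continuous_subtype_val) ⟨⟨x, hxX⟩, hxV⟩
  exact ⟨K, hKc, hKo, hKne, (image_subset_iff.2 hKV).trans interior_subset⟩

theorem stmt_16_general [LocallyCompactSpace B] [T2Space B] (hd : Dense X) (hX : TwoEmbedded X)
    (hGδ : IsGδClosed X) (hπ : HasCompactOpenPiBase X) : AlmostPSpace (Xᶜ : Set B) := by
  rintro G hG ⟨p, hp⟩
  obtain ⟨H, hH, hpH, hHX, hHG⟩ := hGδ.exists_isGδ_of_remainder (isGδ_iff_eq_iInter_nat.2 hG) hp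
  obtain ⟨V, hanti, hVc, hVp, hVH⟩ := exists_antitone_isCompact_nhds_of_isGδ hH hpH
  choose K hKc hKo hKne hKV using fun n =>
    hπ.exists_image_subset hd ⟨p, mem_interior_iff_mem_nhds.2 (hVp n)⟩
  obtain ⟨C, hC, ⟨q, hqC, hqX⟩, hCV⟩ :=
    hX.exists_isClopen_diff_subset hd hVc hanti (hHX.mono_left hVH) hKc hKo hKne hKV
  have hCG : ((↑) : (Xᶜ : Set B) → B) ⁻¹' C ⊆ G := fun y hy => hHG (hVH (hCV ⟨hy, y.2⟩))
  exact ⟨⟨q, hqX⟩, interior_maximal hCG (hC.isOpen.preimage continuous_subtype_val) hqC⟩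

end Remainder

/-- If `X` is a locally compact, `ℕ`-compact zero-dimensional space with
Banaschewski compactification `B`, then the remainder `B ∖ X` is an almost `P`-space. -/
theorem stmt_16 {B : Type u} [TopologicalSpace B] [CompactSpace B] [T2Space B]
    (hB : IsTopologicalBasis {s : Set B | IsClopen s})
    (X : Set B) (hd : Dense X)
    (hext : ∀ g : X → Bool, Continuous g → ∃ G : B → Bool, Continuous G ∧ ∀ x : X, G x = g x)
    (hlc : LocallyCompactSpace X)
    (hN : ∃ (ι : Type v) (e : X → (ι → ℕ)), Topology.IsClosedEmbedding e) :
    AlmostPSpace (Xᶜ : Set B) := by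
  have hX : TwoEmbedded X := hext
  have : TotallySeparatedSpace B := totallySeparatedSpace_of_t0_of_basis_clopen hB
  obtain ⟨ι, e, he⟩ := hN
  exact stmt_16_general hd hX (hX.isGδClosed_of_isClosedEmbedding_pi hd he)
    hasCompactOpenPiBase_of_totallyDisconnectedSpace
end

section
/- Let X be a zero-dimensional space with Banaschewski compactification bX, let F : bX → ℝ be continuous, and suppose Z := F⁻¹({0}) is nonempty and Z ∩ X = ∅. Then the subspace Z is a Parovičenko space: it is compact, Hausdorff with a basis of clopen sets, has no isolated points, every nonempty G_δ subset of Z has nonempty interior in Z, and Z is an F-space. -/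
/-!
The complement `S` of the zero-set `Z` is exhausted by an increasing sequence of clopen sets `K n`
of the compactification, and it inherits the extension property from `X ⊆ S`. Clopen sets `E n`
with `E n` disjoint from `K n` form a locally finite family in `S`, so their union is clopen
relative to `S` and, by the extension property, its closure is clopen in the compactification.
If every `E n` is nonempty, this closure cannot lie in `S`: by compactness it would lie in a single
`K m`, which misses `E m`. So it meets `Z`.

* `F`-space: extend `g` to the compactification and write `pos g = ⋃ n, A n` with `A n` clopen. The
  closure of `⋃ n, A n \ K n` contains `pos g ∩ Z` and misses `neg g`.
* Nonempty `G_δ` sets: given a decreasing sequence of clopen sets `W n` meeting `Z`, choose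
  `E n ⊆ W n ∩ S`. All but finitely many `E n` lie in `W k`, so the trace of the closure on `Z` lies
  in every `W k`.
* No isolated points: pairwise disjoint `E n` inside a clopen set meeting `Z` yield, through the
  even and the odd indices, two disjoint clopen subsets of it, both meeting `Z`.
-/

open Set TopologicalSpace

/-- A topological space is an `F`-space if for every continuous real-valued `g` the sets
`pos g` and `neg g` are completely separated. -/
def FSpace (Y : Type*) [TopologicalSpace Y] : Prop :=
  ∀ g : Y → ℝ, Continuous g → ∃ h : Y → ℝ, Continuous h ∧ (∀ y, h y ∈ Set.Icc (0:ℝ) 1) ∧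
    (∀ y, 0 < g y → h y = 0) ∧ (∀ y, g y < 0 → h y = 1)

/-- `X` is 2-embedded in the ambient space `B`: every continuous function from `X` to the
two-point discrete space, taken to be `Bool`, extends continuously to `B`. -/
def IsTwoEmbedded {B : Type*} [TopologicalSpace B] (X : Set B) : Prop :=
  ∀ g : X → Bool, Continuous g → ∃ G : B → Bool, Continuous G ∧ ∀ x : X, G x = g x

namespace IsTwoEmbedded

variable {B : Type*} [TopologicalSpace B] {X S : Set B}

lemma mono (hX : IsTwoEmbedded X) (hXS : X ⊆ S) (hSX : S ⊆ closure X) : IsTwoEmbedded S := by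
  intro g hg
  obtain ⟨G, hG, hGg⟩ := hX (g ∘ inclusion hXS) (hg.comp (continuous_inclusion hXS))
  have hdense : DenseRange (inclusion hXS) := (denseRange_inclusion_iff hXS).2 hSX
  have hGS : G ∘ Subtype.val = g :=
    hdense.equalizer (hG.comp continuous_subtype_val) hg (funext hGg)
  exact ⟨G, hG, congrFun hGS⟩

lemma exists_isClopen_preimage_eq (hS : IsTwoEmbedded S) {T : Set S} (hT : IsClopen T) :
    ∃ C : Set B, IsClopen C ∧ (Subtype.val ⁻¹' C : Set S) = T := by
  obtain ⟨G, hG, hGT⟩ := hS T.boolIndicator ((continuous_boolIndicator_iff_isClopen T).2 hT)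
  refine ⟨G ⁻¹' {true}, (isClopen_discrete {true}).preimage hG, ?_⟩
  have hGT' : G ∘ Subtype.val = T.boolIndicator := funext hGT
  rw [← preimage_comp, hGT', preimage_boolIndicator_true]

lemma isClopen_closure_of_disjoint_cover (hS : IsTwoEmbedded S) (hd : Dense S) {U V : Set B}
    (hU : IsOpen U) (hV : IsOpen V) (hUV : Disjoint U V) (hSUV : S ⊆ U ∪ V) :
    IsClopen (closure U) := by
  have hT : IsClopen (Subtype.val ⁻¹' U : Set S) :=
    isClopen_of_disjoint_cover_open (fun x _ => hSUV x.2) (hU.preimage continuous_subtype_val)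
      (hV.preimage continuous_subtype_val) (hUV.preimage _)
  obtain ⟨C, hC, hCU⟩ := hS.exists_isClopen_preimage_eq hT
  have hCS : S ∩ C = S ∩ U := (Subtype.preimage_val_eq_preimage_val_iff _ _ _).1 hCU
  have hUC : closure U = C := by
    apply Subset.antisymm
    · refine closure_minimal ((hd.open_subset_closure_inter hU).trans ?_) hC.isClosed
      rw [inter_comm, ← hCS]
      exact closure_minimal inter_subset_right hC.isClosed
    · refine (hd.open_subset_closure_inter hC.isOpen).trans (closure_mono ?_)
      rw [inter_comm, hCS]
      exact inter_subset_right
  rwa [hUC]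

end IsTwoEmbedded

/-- `K` is an increasing sequence of clopen sets of the ambient space with union `S`; in a compact
space these are compact sets exhausting the open set `S`. -/
structure IsClopenExhaustion {B : Type*} [TopologicalSpace B] (K : ℕ → Set B) (S : Set B) :
    Prop where
  isClopen : ∀ n, IsClopen (K n)
  monotone : Monotone K
  iUnion_eq : ⋃ n, K n = S

lemma exists_isClopenExhaustion_preimage {B E : Type*} [TopologicalSpace B] [CompactSpace B]
    [T2Space B] [TotallyDisconnectedSpace B] [PseudoEMetricSpace E] {f : B → E}
    (hf : Continuous f) {O : Set E} (hO : IsOpen O) :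
    ∃ K : ℕ → Set B, IsClopenExhaustion K (f ⁻¹' O) := by
  obtain ⟨T, hT, hTO, hTU, -⟩ := hO.exists_iUnion_isClosed
  choose A hA hTA hAO using fun n => exists_clopen_of_closed_subset_open ((hT n).preimage hf)
    (hO.preimage hf) (preimage_mono (hTO n))
  refine ⟨accumulate A, fun n => (finite_Iic n).isClopen_biUnion fun i _ => hA i,
    monotone_accumulate, ?_⟩
  rw [iUnion_accumulate]
  refine Subset.antisymm (iUnion_subset hAO) ?_
  rw [← hTU, preimage_iUnion]
  exact iUnion_mono hTA

namespace IsClopenExhaustion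

open Function

variable {B : Type*} [TopologicalSpace B] {K E W : ℕ → Set B} {S : Set B}

lemma subset (hK : IsClopenExhaustion K S) (n : ℕ) : K n ⊆ S :=
  hK.iUnion_eq ▸ subset_iUnion K n

lemma exists_mem (hK : IsClopenExhaustion K S) {x : B} (hx : x ∈ S) : ∃ n, x ∈ K n :=
  mem_iUnion.1 (hK.iUnion_eq ▸ hx)

lemma isOpen (hK : IsClopenExhaustion K S) : IsOpen S :=
  hK.iUnion_eq ▸ isOpen_iUnion fun n => (hK.isClopen n).isOpen

lemma isOpen_sdiff_iUnion (hK : IsClopenExhaustion K S) (hE : ∀ n, IsClosed (E n))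
    (hEK : ∀ n, Disjoint (E n) (K n)) : IsOpen (S \ ⋃ n, E n) := by
  -- a point of `K m` only has to avoid the finitely many `E n` with `n < m`
  have hS : S \ ⋃ n, E n = ⋃ m, K m \ ⋃ n ∈ Iio m, E n := by
    ext x
    simp only [mem_sdiff, mem_iUnion, mem_Iio, exists_prop, not_exists, not_and]
    constructor
    · rintro ⟨hxS, hxE⟩
      obtain ⟨m, hm⟩ := hK.exists_mem hxS
      exact ⟨m, hm, fun n _ => hxE n⟩
    · rintro ⟨m, hm, hxE⟩
      refine ⟨hK.subset m hm, fun n hn => ?_⟩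
      rcases lt_or_ge n m with hnm | hmn
      · exact hxE n hnm hn
      · exact disjoint_left.1 (hEK n) hn (hK.monotone hmn hm)
  rw [hS]
  exact isOpen_iUnion fun m =>
    (hK.isClopen m).isOpen.sdiff ((finite_Iio m).isClosed_biUnion fun n _ => hE n)

lemma isClopen_closure_iUnion (hK : IsClopenExhaustion K S) (hS : IsTwoEmbedded S)
    (hd : Dense S) (hE : ∀ n, IsClopen (E n)) (hEK : ∀ n, Disjoint (E n) (K n)) :
    IsClopen (closure (⋃ n, E n)) :=
  hS.isClopen_closure_of_disjoint_cover hd (isOpen_iUnion fun n => (hE n).isOpen)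
    (hK.isOpen_sdiff_iUnion (fun n => (hE n).isClosed) hEK) disjoint_sdiff_right
    (by rw [union_sdiff_self]; exact subset_union_right)

lemma closure_iUnion_sdiff_nonempty [CompactSpace B] (hK : IsClopenExhaustion K S)
    (hE : ∀ n, (E n).Nonempty) (hEK : ∀ n, Disjoint (E n) (K n)) :
    (closure (⋃ n, E n) \ S).Nonempty := by
  rw [sdiff_nonempty, ← hK.iUnion_eq]
  intro hsub
  obtain ⟨m, hm⟩ := isClosed_closure.isCompact.elim_directed_cover K
    (fun n => (hK.isClopen n).isOpen) hsub hK.monotone.directed_le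
  exact (hE m).not_subset_empty
    (hEK m subset_rfl (((subset_iUnion E m).trans subset_closure).trans hm))

lemma exists_inter_sdiff_nonempty (hK : IsClopenExhaustion K S) (hd : Dense S) {U : Set B}
    (hU : IsOpen U) (hUS : (U \ S).Nonempty) (n : ℕ) : ∃ m, (U ∩ (K m \ K n)).Nonempty := by
  obtain ⟨x, ⟨hxU, hxn⟩, hxS⟩ := hd.inter_open_nonempty (U \ K n)
    (hU.sdiff (hK.isClopen n).isClosed) (hUS.mono (sdiff_subset_sdiff_right (hK.subset n)))
  obtain ⟨m, hm⟩ := hK.exists_mem hxS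
  exact ⟨m, x, hxU, hm, hxn⟩

lemma exists_pairwise_disjoint_seq (hK : IsClopenExhaustion K S) (hd : Dense S)
    (hW : ∀ n, IsClopen (W n)) (hWanti : Antitone W) (hWS : ∀ n, (W n \ S).Nonempty) :
    ∃ E : ℕ → Set B, (∀ n, IsClopen (E n)) ∧ (∀ n, (E n).Nonempty) ∧
      (∀ n, E n ⊆ W n ∩ (S \ K n)) ∧ Pairwise (Disjoint on E) := by
  choose f hf using fun n => hK.exists_inter_sdiff_nonempty hd (hW n).isOpen (hWS n) n
  have hlt (n : ℕ) : n < f n := by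
    by_contra! hle
    obtain ⟨x, -, hx, hxn⟩ := hf n
    exact hxn (hK.monotone hle hx)
  set φ : ℕ → ℕ := fun n => f^[n] 0
  have hφ_succ (n : ℕ) : φ (n + 1) = f (φ n) := iterate_succ_apply' f n 0
  have hφ : StrictMono φ := strictMono_nat_of_lt_succ fun n => hφ_succ n ▸ hlt (φ n)
  refine ⟨fun n => W (φ n) ∩ (K (φ (n + 1)) \ K (φ n)),
    fun n => (hW _).inter ((hK.isClopen _).diff (hK.isClopen _)),
    fun n => ?_, fun n => ?_, ?_⟩
  · simpa only [hφ_succ] using hf (φ n)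
  · exact inter_subset_inter (hWanti (hφ.id_le n))
      (sdiff_subset_sdiff (hK.subset _) (hK.monotone (hφ.id_le n)))
  · refine (pairwise_disjoint_on _).2 fun i j hij => disjoint_left.2 ?_
    rintro x ⟨-, hxi, -⟩ ⟨-, -, hxj⟩
    exact hxj (hK.monotone (hφ.monotone hij) hxi)

lemma exists_isClopen_sdiff_subset_iInter [CompactSpace B] (hK : IsClopenExhaustion K S)
    (hS : IsTwoEmbedded S) (hd : Dense S) (hW : ∀ n, IsClopen (W n)) (hWanti : Antitone W)
    (hWS : ∀ n, (W n \ S).Nonempty) :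
    ∃ C : Set B, IsClopen C ∧ (C \ S).Nonempty ∧ C \ S ⊆ ⋂ n, W n := by
  obtain ⟨E, hE, hEne, hEW, -⟩ := hK.exists_pairwise_disjoint_seq hd hW hWanti hWS
  have hEK (n : ℕ) : Disjoint (E n) (K n) :=
    disjoint_sdiff_left.mono_left ((hEW n).trans inter_subset_right)
  refine ⟨closure (⋃ n, E n), hK.isClopen_closure_iUnion hS hd hE hEK,
    hK.closure_iUnion_sdiff_nonempty hEne hEK, fun x hx => mem_iInter.2 fun k => ?_⟩
  have hclosure : closure (⋃ n, E n) ⊆ (⋃ n ∈ Iio k, E n) ∪ W k := by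
    refine closure_minimal (iUnion_subset fun n => ?_)
      (((finite_Iio k).isClosed_biUnion fun n _ => (hE n).isClosed).union (hW k).isClosed)
    rcases lt_or_ge n k with hnk | hkn
    · exact fun y hy => Or.inl (mem_biUnion hnk hy)
    · exact fun y hy => Or.inr (hWanti hkn (hEW n hy).1)
  refine (hclosure hx.1).resolve_left fun hxE => hx.2 ?_
  obtain ⟨n, -, hn⟩ := mem_iUnion₂.1 hxE
  exact (hEW n hn).2.1

lemma exists_disjoint_isClopen_subset [CompactSpace B] (hK : IsClopenExhaustion K S)
    (hS : IsTwoEmbedded S) (hd : Dense S) {U : Set B} (hU : IsClopen U)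
    (hUS : (U \ S).Nonempty) :
    ∃ C D : Set B, IsClopen C ∧ IsClopen D ∧ C ⊆ U ∧ D ⊆ U ∧ Disjoint C D ∧
      (C \ S).Nonempty ∧ (D \ S).Nonempty := by
  obtain ⟨E, hE, hEne, hEU, hEdisj⟩ :=
    hK.exists_pairwise_disjoint_seq hd (fun _ => hU) antitone_const fun _ => hUS
  have hsub {ψ : ℕ → ℕ} (hψ : ∀ n, n ≤ ψ n) : IsClopen (closure (⋃ n, E (ψ n))) ∧
      closure (⋃ n, E (ψ n)) ⊆ U ∧ (closure (⋃ n, E (ψ n)) \ S).Nonempty := by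
    have hEK (n : ℕ) : Disjoint (E (ψ n)) (K n) := disjoint_left.2 fun x hx hxn =>
      (hEU (ψ n) hx).2.2 (hK.monotone (hψ n) hxn)
    exact ⟨hK.isClopen_closure_iUnion hS hd (fun n => hE (ψ n)) hEK,
      closure_minimal (iUnion_subset fun n => (hEU (ψ n)).trans inter_subset_left) hU.isClosed,
      hK.closure_iUnion_sdiff_nonempty (fun n => hEne (ψ n)) hEK⟩
  obtain ⟨hC, hCU, hCS⟩ := hsub (ψ := fun n => 2 * n) fun n => by lia
  obtain ⟨hD, hDU, hDS⟩ := hsub (ψ := fun n => 2 * n + 1) fun n => by lia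
  have hdisj : Disjoint (⋃ n, E (2 * n)) (⋃ n, E (2 * n + 1)) :=
    disjoint_iUnion_left.2 fun i => disjoint_iUnion_right.2 fun j => hEdisj (by lia)
  exact ⟨_, _, hC, hD, hCU, hDU,
    (hdisj.closure_left (isOpen_iUnion fun n => (hE _).isOpen)).closure_right hC.isOpen, hCS, hDS⟩

lemma exists_isClopen_separating [CompactSpace B] [T2Space B] [TotallyDisconnectedSpace B]
    (hK : IsClopenExhaustion K S) (hS : IsTwoEmbedded S) (hd : Dense S) {g : B → ℝ}
    (hg : Continuous g) :
    ∃ C : Set B, IsClopen C ∧ {x | 0 < g x} \ S ⊆ C ∧ Disjoint {x | g x < 0} C := by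
  obtain ⟨A, hA⟩ := exists_isClopenExhaustion_preimage hg (isOpen_Ioi (a := 0))
  refine ⟨closure (⋃ n, A n \ K n), hK.isClopen_closure_iUnion hS hd
    (fun n => (hA.isClopen n).diff (hK.isClopen n)) fun n => disjoint_sdiff_left, ?_, ?_⟩
  · rintro x ⟨hx, hxS⟩
    obtain ⟨n, hn⟩ := hA.exists_mem hx
    exact subset_closure (mem_iUnion.2 ⟨n, hn, fun hxn => hxS (hK.subset n hxn)⟩)
  · refine Disjoint.closure_right (disjoint_iUnion_right.2 fun n => ?_)
      (isOpen_lt hg continuous_const)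
    exact disjoint_left.2 fun x (hx : g x < 0) hxn => hx.not_gt (hA.subset n hxn.1)

end IsClopenExhaustion

lemma exists_isClopen_preimage_val_subset {B : Type*} [TopologicalSpace B] [CompactSpace B]
    [T2Space B] [TotallyDisconnectedSpace B] {Z : Set B} {U : Set Z} (hU : IsOpen U) {p : Z}
    (hp : p ∈ U) : ∃ W : Set B, IsClopen W ∧ ↑p ∈ W ∧ Subtype.val ⁻¹' W ⊆ U := by
  obtain ⟨O, hO, rfl⟩ := isOpen_induced_iff.1 hU
  obtain ⟨W, hW, hpW, hWO⟩ := compact_exists_isClopen_in_isOpen hO hp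
  exact ⟨W, hW, hpW, preimage_mono hWO⟩

lemma FSpace.of_exists_isClopen {Y : Type*} [TopologicalSpace Y]
    (h : ∀ g : Y → ℝ, Continuous g →
      ∃ C : Set Y, IsClopen C ∧ {y | 0 < g y} ⊆ C ∧ Disjoint {y | g y < 0} C) :
    FSpace Y := by
  intro g hg
  obtain ⟨C, hC, hpos, hneg⟩ := h g hg
  exact ⟨Cᶜ.indicator 1, hC.compl.continuous_indicator continuous_one,
    fun y => ⟨indicator_nonneg (fun _ _ => zero_le_one) y,
      indicator_le_self' (fun _ _ => zero_le_one) y⟩,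
    fun y hy => indicator_of_notMem (notMem_compl_iff.2 (hpos hy)) 1,
    fun y hy => indicator_of_mem (disjoint_left.1 hneg hy) 1⟩

namespace IsClopenExhaustion

variable {B : Type*} [TopologicalSpace B] [CompactSpace B] [T2Space B]
  [TotallyDisconnectedSpace B] {K : ℕ → Set B} {Z : Set B}

lemma not_isOpen_singleton_of_compl (hK : IsClopenExhaustion K Zᶜ) (hZ : IsTwoEmbedded Zᶜ)
    (hd : Dense Zᶜ) (p : Z) : ¬ IsOpen ({p} : Set Z) := by
  intro hp
  obtain ⟨W, hW, hpW, hWp⟩ := exists_isClopen_preimage_val_subset hp rfl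
  obtain ⟨C, D, -, -, hCW, hDW, hCD, ⟨x, hxC, hxZ⟩, ⟨y, hyD, hyZ⟩⟩ :=
    hK.exists_disjoint_isClopen_subset hZ hd hW ⟨p, hpW, notMem_compl_iff.2 p.2⟩
  have hxp : x = p := congrArg Subtype.val (@hWp ⟨x, notMem_compl_iff.1 hxZ⟩ (hCW hxC))
  have hyp : y = p := congrArg Subtype.val (@hWp ⟨y, notMem_compl_iff.1 hyZ⟩ (hDW hyD))
  exact disjoint_left.1 hCD hxC (hxp.trans hyp.symm ▸ hyD)

lemma almostPSpace_of_compl (hK : IsClopenExhaustion K Zᶜ) (hZ : IsTwoEmbedded Zᶜ)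
    (hd : Dense Zᶜ) : AlmostPSpace Z := by
  rintro G ⟨U, hU, rfl⟩ ⟨p, hp⟩
  choose W hW hpW hWU using fun n =>
    exists_isClopen_preimage_val_subset (hU n) (mem_iInter.1 hp n)
  have hWdiss (n : ℕ) : IsClopen (dissipate W n) :=
    (finite_Iic n).isClopen_biInter fun i _ => hW i
  obtain ⟨C, hC, ⟨q, hqC, hqZ⟩, hCW⟩ := hK.exists_isClopen_sdiff_subset_iInter hZ hd hWdiss
    antitone_dissipate fun n => ⟨p, mem_dissipate.2 fun i _ => hpW i, notMem_compl_iff.2 p.2⟩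
  rw [iInter_dissipate] at hCW
  refine ⟨⟨q, notMem_compl_iff.1 hqZ⟩, interior_maximal (fun z hz => ?_)
    (hC.isOpen.preimage continuous_subtype_val) hqC⟩
  exact mem_iInter.2 fun n => hWU n (mem_iInter.1 (hCW ⟨hz, notMem_compl_iff.2 z.2⟩) n)

lemma fSpace_of_compl (hK : IsClopenExhaustion K Zᶜ) (hZ : IsTwoEmbedded Zᶜ) (hd : Dense Zᶜ) :
    FSpace Z := by
  refine FSpace.of_exists_isClopen fun g hg => ?_
  have hZclosed : IsClosed Z := isOpen_compl_iff.1 hK.isOpen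
  obtain ⟨G, hG⟩ := ContinuousMap.exists_restrict_eq hZclosed ⟨g, hg⟩
  obtain rfl : G ∘ Subtype.val = g := congrArg DFunLike.coe hG
  obtain ⟨C, hC, hpos, hneg⟩ := hK.exists_isClopen_separating hZ hd G.continuous
  exact ⟨Subtype.val ⁻¹' C, hC.preimage continuous_subtype_val,
    fun z hz => hpos ⟨hz, notMem_compl_iff.2 z.2⟩, hneg.preimage Subtype.val⟩

end IsClopenExhaustion

/-- A nonempty zero-set `Z` of the Banaschewski compactification `B` of a
zero-dimensional space `X` that misses `X` is a Parovičenko space: compact, Hausdorff with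
a clopen basis, with no isolated points, nonempty `G_δ` sets have nonempty interior, and
it is an `F`-space. -/
theorem stmt_17 {B : Type*} [TopologicalSpace B] [CompactSpace B] [T2Space B]
    (hB : IsTopologicalBasis {s : Set B | IsClopen s})
    (X : Set B) (hd : Dense X)
    (hext : ∀ g : X → Bool, Continuous g → ∃ G : B → Bool, Continuous G ∧ ∀ x : X, G x = g x)
    (F : B → ℝ) (hF : Continuous F)
    (hne : (F ⁻¹' {0}).Nonempty) (hZX : F ⁻¹' {0} ∩ X = ∅) :
    CompactSpace (F ⁻¹' {0}) ∧ T2Space (F ⁻¹' {0}) ∧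
      IsTopologicalBasis {s : Set (F ⁻¹' {0}) | IsClopen s} ∧
      (∀ p : (F ⁻¹' {0} : Set B), ¬ IsOpen ({p} : Set (F ⁻¹' {0}))) ∧
      AlmostPSpace (F ⁻¹' {0}) ∧ FSpace (F ⁻¹' {0}) := by
  have hZ : IsClosed (F ⁻¹' {0}) := isClosed_singleton.preimage hF
  have : CompactSpace (F ⁻¹' {0}) := isCompact_iff_compactSpace.1 hZ.isCompact
  have : TotallySeparatedSpace B := totallySeparatedSpace_of_t0_of_basis_clopen hB
  have hXS : X ⊆ (F ⁻¹' {0})ᶜ := (disjoint_iff_inter_eq_empty.2 hZX).subset_compl_left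
  have hdS : Dense (F ⁻¹' {0})ᶜ := hd.mono hXS
  have hS : IsTwoEmbedded (F ⁻¹' {0})ᶜ := IsTwoEmbedded.mono hext hXS fun x _ => hd x
  obtain ⟨K, hK⟩ : ∃ K, IsClopenExhaustion K (F ⁻¹' {0})ᶜ :=
    exists_isClopenExhaustion_preimage hF isOpen_compl_singleton
  exact ⟨inferInstance, inferInstance, isTopologicalBasis_isClopen,
    hK.not_isOpen_singleton_of_compl hS hdS, hK.almostPSpace_of_compl hS hdS,
    hK.fSpace_of_compl hS hdS⟩
end
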